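/- arXiv:2509.21174 — 2 statements merged into one kernel-verified Lean document; each statement's English description precedes it below -/
import Mathlib

section
/- Let W = Σ_{i=1}^n X_i X_iᵀ where X_1,…,X_n are i.i.d. N(0, Σ) in ℝ^d with Σ positive definite, and suppose d > n + 1. Then E[Tr(W†)] ≤ (n / (d(d - n - 1))) · Tr(Σ⁻¹), where W† is the Moore–Penrose pseudoinverse. -/
/-!
For `S` positive semidefinite let `T_ε(S) = (S + ε)⁻¹ S (S + ε)⁻¹`, which tends to `S†` as `ε → 0`.
Write `Σ = L Lᵀ`, `M = L⁻¹` and `X = L Z`, so that the columns of the `d × n` matrix `Z` are i.i.d.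
standard Gaussian vectors and `W = L (Z Zᵀ) Lᵀ`. The matrix `G = Mᵀ T_ε(Z Zᵀ) M` is an approximate
generalized inverse of `W`: it satisfies `0 ≤ W - W G W ≤ 2 ε L Lᵀ`. Since
`Tr W† = Tr (W† W G) + Tr (W† (W - W G W) W†)` and `W† W` is an orthogonal projection, this yields
`Tr W† ≤ Tr G + O(ε)`, the regularized form of `Tr W† ≤ Tr W⁻`.

The law of `Z` is invariant under `Z ↦ U Z` for orthogonal `U`, so `E T_ε(Z Zᵀ)` is a multiple of
the identity, and only its trace has to be bounded. Stein's identity for the bounded field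
`H = Z (Zᵀ Z + ε)⁻¹` gives `E Tr (Zᵀ H) = E div H`, where `Tr (Zᵀ H) ≤ n` and
`div H ≥ (d - n - 1) Tr T_ε(Z Zᵀ)`. Hence `E Tr G ≤ n / (d (d - n - 1)) Tr Σ⁻¹` for every `ε > 0`,
and Fatou's lemma concludes.
-/

open Matrix MeasureTheory ProbabilityTheory BigOperators

/-- `B` is the Moore–Penrose pseudoinverse of `A` (the four Penrose conditions, which
characterize it uniquely). -/
def IsMoorePenrose {d : ℕ} (A B : Matrix (Fin d) (Fin d) ℝ) : Prop :=
  A * B * A = A ∧ B * A * B = B ∧ (A * B)ᵀ = A * B ∧ (B * A)ᵀ = B * A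

section RidgeInverse

variable {m : Type*} [Fintype m] [DecidableEq m] {S : Matrix m m ℝ} {ε : ℝ}

/-- The resolvent `(S + ε)⁻¹` of `-S`, as it occurs in ridge regression. -/
noncomputable def ridgeInv (ε : ℝ) (S : Matrix m m ℝ) : Matrix m m ℝ :=
  (S + ε • (1 : Matrix m m ℝ))⁻¹

/-- The Tikhonov regularization `(S + ε)⁻¹ S (S + ε)⁻¹` of the pseudoinverse of a positive
semidefinite matrix `S`, which it approximates as `ε → 0`. -/
noncomputable def tikhonovInv (ε : ℝ) (S : Matrix m m ℝ) : Matrix m m ℝ :=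
  ridgeInv ε S * S * ridgeInv ε S

theorem isUnit_add_smul_one (hS : S.PosSemidef) (hε : 0 < ε) :
    IsUnit (S + ε • (1 : Matrix m m ℝ)) :=
  (PosDef.posSemidef_add hS (PosDef.one.smul hε)).isUnit

theorem add_smul_one_mul_ridgeInv (hS : S.PosSemidef) (hε : 0 < ε) :
    (S + ε • (1 : Matrix m m ℝ)) * ridgeInv ε S = 1 :=
  mul_nonsing_inv _ ((isUnit_iff_isUnit_det _).1 (isUnit_add_smul_one hS hε))

theorem ridgeInv_mul_add_smul_one (hS : S.PosSemidef) (hε : 0 < ε) :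
    ridgeInv ε S * (S + ε • (1 : Matrix m m ℝ)) = 1 :=
  nonsing_inv_mul _ ((isUnit_iff_isUnit_det _).1 (isUnit_add_smul_one hS hε))

theorem mul_ridgeInv (hS : S.PosSemidef) (hε : 0 < ε) :
    S * ridgeInv ε S = 1 - ε • ridgeInv ε S :=
  eq_sub_of_add_eq (by simpa [add_mul] using add_smul_one_mul_ridgeInv hS hε)

theorem ridgeInv_mul (hS : S.PosSemidef) (hε : 0 < ε) :
    ridgeInv ε S * S = 1 - ε • ridgeInv ε S :=
  eq_sub_of_add_eq (by simpa [mul_add] using ridgeInv_mul_add_smul_one hS hε)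

theorem posSemidef_ridgeInv (hS : S.PosSemidef) (hε : 0 < ε) : (ridgeInv ε S).PosSemidef :=
  (PosDef.posSemidef_add hS (PosDef.one.smul hε)).posSemidef.inv

theorem transpose_ridgeInv (hS : S.PosSemidef) (hε : 0 < ε) :
    (ridgeInv ε S)ᵀ = ridgeInv ε S := by
  simpa using (posSemidef_ridgeInv hS hε).isHermitian.eq

theorem posSemidef_tikhonovInv (hS : S.PosSemidef) (hε : 0 < ε) :
    (tikhonovInv ε S).PosSemidef := by
  simpa only [tikhonovInv, (posSemidef_ridgeInv hS hε).isHermitian.eq]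
    using hS.mul_mul_conjTranspose_same (ridgeInv ε S)

theorem tikhonovInv_eq_sub (hS : S.PosSemidef) (hε : 0 < ε) :
    tikhonovInv ε S = ridgeInv ε S - ε • (ridgeInv ε S * ridgeInv ε S) := by
  rw [tikhonovInv, ridgeInv_mul hS hε, sub_mul, one_mul, smul_mul_assoc]

theorem posSemidef_ridgeInv_sub_tikhonovInv (hS : S.PosSemidef) (hε : 0 < ε) :
    (ridgeInv ε S - tikhonovInv ε S).PosSemidef := by
  have hsq := posSemidef_conjTranspose_mul_self (ridgeInv ε S)
  rw [(posSemidef_ridgeInv hS hε).isHermitian.eq] at hsq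
  simpa [tikhonovInv_eq_sub hS hε] using hsq.smul hε.le

theorem posSemidef_one_sub_smul_ridgeInv (hS : S.PosSemidef) (hε : 0 < ε) :
    (1 - ε • ridgeInv ε S).PosSemidef := by
  have hsq := posSemidef_conjTranspose_mul_self (1 - ε • ridgeInv ε S)
  have hsum : 1 - ε • ridgeInv ε S =
      (1 - ε • ridgeInv ε S)ᴴ * (1 - ε • ridgeInv ε S) + ε • tikhonovInv ε S := by
    rw [tikhonovInv_eq_sub hS hε, conjTranspose_sub, conjTranspose_one, conjTranspose_smul,
      (posSemidef_ridgeInv hS hε).isHermitian.eq, star_trivial]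
    noncomm_ring
  rw [hsum]
  exact hsq.add ((posSemidef_tikhonovInv hS hε).smul hε.le)

theorem ridgeInv_diag_le (hS : S.PosSemidef) (hε : 0 < ε) (i : m) :
    ridgeInv ε S i i ≤ 1 / ε := by
  have h := (posSemidef_one_sub_smul_ridgeInv hS hε).diag_nonneg (i := i)
  simp only [Matrix.sub_apply, one_apply_eq, Matrix.smul_apply, smul_eq_mul, sub_nonneg] at h
  rwa [le_div_iff₀' hε]

theorem tikhonovInv_diag_le (hS : S.PosSemidef) (hε : 0 < ε) (i : m) :
    tikhonovInv ε S i i ≤ 1 / ε := by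
  have h := (posSemidef_ridgeInv_sub_tikhonovInv hS hε).diag_nonneg (i := i)
  exact (sub_nonneg.1 h).trans (ridgeInv_diag_le hS hε i)

theorem sub_mul_tikhonovInv_mul (hS : S.PosSemidef) (hε : 0 < ε) :
    S - S * tikhonovInv ε S * S =
      (2 * ε) • (1 - ε • ridgeInv ε S) - ε ^ 2 • tikhonovInv ε S := by
  have h : S * tikhonovInv ε S * S =
      (1 - ε • ridgeInv ε S) * S * (1 - ε • ridgeInv ε S) := by
    rw [← mul_ridgeInv hS hε]
    nth_rw 2 [mul_ridgeInv hS hε]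
    rw [← ridgeInv_mul hS hε, tikhonovInv]
    simp only [Matrix.mul_assoc]
  rw [h, tikhonovInv]
  have h₁ := mul_ridgeInv hS hε
  have h₂ := ridgeInv_mul hS hε
  simp only [sub_mul, mul_sub, one_mul, mul_one, smul_mul_assoc, mul_smul_comm, h₁, h₂]
  module

theorem posSemidef_sub_mul_tikhonovInv_mul (hS : S.PosSemidef) (hε : 0 < ε) :
    (S - S * tikhonovInv ε S * S).PosSemidef := by
  have hN := posSemidef_one_sub_smul_ridgeInv hS hε
  have hsq := posSemidef_conjTranspose_mul_self (1 - ε • ridgeInv ε S)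
  have h : S - S * tikhonovInv ε S * S = ε • ((1 - ε • ridgeInv ε S) +
      (1 - ε • ridgeInv ε S)ᴴ * (1 - ε • ridgeInv ε S)) := by
    rw [sub_mul_tikhonovInv_mul hS hε, hN.isHermitian.eq, tikhonovInv_eq_sub hS hε]
    noncomm_ring
    module
  rw [h]
  exact (hN.add hsq).smul hε.le

theorem posSemidef_smul_one_sub_sub_mul_tikhonovInv_mul (hS : S.PosSemidef) (hε : 0 < ε) :
    ((2 * ε) • (1 : Matrix m m ℝ) - (S - S * tikhonovInv ε S * S)).PosSemidef := by
  have h : (2 * ε) • (1 : Matrix m m ℝ) - (S - S * tikhonovInv ε S * S) =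
      (2 * ε ^ 2) • ridgeInv ε S + ε ^ 2 • tikhonovInv ε S := by
    rw [sub_mul_tikhonovInv_mul hS hε]
    module
  rw [h]
  exact ((posSemidef_ridgeInv hS hε).smul (by positivity)).add
    ((posSemidef_tikhonovInv hS hε).smul (by positivity))

theorem tikhonovInv_conj (hS : S.PosSemidef) (hε : 0 < ε) {U : Matrix m m ℝ}
    (hU : U * Uᵀ = 1) : tikhonovInv ε (U * S * Uᵀ) = U * tikhonovInv ε S * Uᵀ := by
  have hU' : Uᵀ * U = 1 := mul_eq_one_comm.1 hU
  have hcancel (M : Matrix m m ℝ) : Uᵀ * (U * M) = M := by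
    rw [← Matrix.mul_assoc, hU', Matrix.one_mul]
  have hR : ridgeInv ε (U * S * Uᵀ) = U * ridgeInv ε S * Uᵀ := by
    refine inv_eq_right_inv ?_
    have h : U * S * Uᵀ + ε • (1 : Matrix m m ℝ) = U * (S + ε • 1) * Uᵀ := by
      simp [mul_add, add_mul, hU]
    rw [h, Matrix.mul_assoc, Matrix.mul_assoc U (ridgeInv ε S), hcancel, Matrix.mul_assoc U,
      ← Matrix.mul_assoc _ _ Uᵀ, add_smul_one_mul_ridgeInv hS hε, Matrix.one_mul, hU]
  rw [tikhonovInv, hR]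
  simp only [tikhonovInv, Matrix.mul_assoc, hcancel]

theorem continuousOn_ridgeInv (hε : 0 < ε) :
    ContinuousOn (ridgeInv ε) {S : Matrix m m ℝ | S.PosSemidef} := by
  have hM : Continuous fun S : Matrix m m ℝ => S + ε • (1 : Matrix m m ℝ) := by fun_prop
  have hdet : ∀ S ∈ {S : Matrix m m ℝ | S.PosSemidef}, (S + ε • (1 : Matrix m m ℝ)).det ≠ 0 :=
    fun S hS => ((isUnit_iff_isUnit_det _).1 (isUnit_add_smul_one hS hε)).ne_zero
  refine ((hM.matrix_det.continuousOn.inv₀ hdet).smul hM.matrix_adjugate.continuousOn).congr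
    fun S _ => ?_
  rw [ridgeInv, Matrix.inv_def, Ring.inverse_eq_inv']
  rfl

end RidgeInverse

section RidgeFactor

variable {m n : Type*}

theorem posSemidef_transpose_mul_self [Fintype m] [Finite n] (Z : Matrix m n ℝ) :
    (Zᵀ * Z).PosSemidef := by
  simpa using posSemidef_conjTranspose_mul_self Z

theorem posSemidef_self_mul_transpose [Finite m] [Fintype n] (Z : Matrix m n ℝ) :
    (Z * Zᵀ).PosSemidef := by
  simpa using posSemidef_self_mul_conjTranspose Z

theorem continuous_ridgeInv_mul_transpose [Fintype m] [DecidableEq m] [Fintype n] {ε : ℝ}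
    (hε : 0 < ε) :
    Continuous fun Z : Matrix m n ℝ => ridgeInv ε (Z * Zᵀ) :=
  (continuousOn_ridgeInv hε).comp_continuous (by fun_prop) posSemidef_self_mul_transpose

theorem continuous_tikhonovInv_mul_transpose [Fintype m] [DecidableEq m] [Fintype n] {ε : ℝ}
    (hε : 0 < ε) :
    Continuous fun Z : Matrix m n ℝ => tikhonovInv ε (Z * Zᵀ) :=
  ((continuous_ridgeInv_mul_transpose hε).matrix_mul (by fun_prop)).matrix_mul
    (continuous_ridgeInv_mul_transpose hε)

variable [Fintype m] [Fintype n] [DecidableEq n] {ε : ℝ}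

/-- The regularization `Z (ZᵀZ + ε)⁻¹` of the transposed pseudoinverse of `Z`. Its Gram matrix
`H Hᵀ` is `tikhonovInv ε (Z Zᵀ)`. -/
noncomputable def ridgeFactor (ε : ℝ) (Z : Matrix m n ℝ) : Matrix m n ℝ :=
  Z * ridgeInv ε (Zᵀ * Z)

theorem transpose_mul_ridgeFactor (hε : 0 < ε) (Z : Matrix m n ℝ) :
    (ridgeFactor ε Z)ᵀ * ridgeFactor ε Z = tikhonovInv ε (Zᵀ * Z) := by
  rw [ridgeFactor, transpose_mul,
    transpose_ridgeInv (posSemidef_transpose_mul_self Z) hε, tikhonovInv]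
  simp only [Matrix.mul_assoc]

theorem trace_transpose_mul_ridgeFactor (hε : 0 < ε) (Z : Matrix m n ℝ) :
    (Zᵀ * ridgeFactor ε Z).trace = Fintype.card n - ε * (ridgeInv ε (Zᵀ * Z)).trace := by
  rw [ridgeFactor, ← Matrix.mul_assoc, mul_ridgeInv (posSemidef_transpose_mul_self Z) hε]
  simp

theorem continuous_ridgeInv_transpose_mul (hε : 0 < ε) :
    Continuous fun Z : Matrix m n ℝ => ridgeInv ε (Zᵀ * Z) :=
  (continuousOn_ridgeInv hε).comp_continuous (by fun_prop) posSemidef_transpose_mul_self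

theorem continuous_ridgeFactor (hε : 0 < ε) :
    Continuous (ridgeFactor ε : Matrix m n ℝ → Matrix m n ℝ) :=
  continuous_id.matrix_mul (continuous_ridgeInv_transpose_mul hε)

theorem ridgeFactor_sq_le (hε : 0 < ε) (Z : Matrix m n ℝ) (a : m) (i : n) :
    ridgeFactor ε Z a i ^ 2 ≤ 1 / ε :=
  calc ridgeFactor ε Z a i ^ 2 ≤ ((ridgeFactor ε Z)ᵀ * ridgeFactor ε Z) i i := by
        simp only [mul_apply, transpose_apply, ← sq]
        exact Finset.single_le_sum (f := fun b => ridgeFactor ε Z b i ^ 2)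
          (fun _ _ => sq_nonneg _) (Finset.mem_univ a)
    _ ≤ 1 / ε := by
        rw [transpose_mul_ridgeFactor hε]
        exact tikhonovInv_diag_le (posSemidef_transpose_mul_self Z) hε i

theorem abs_ridgeFactor_le (hε : 0 < ε) (Z : Matrix m n ℝ) (a : m) (i : n) :
    |ridgeFactor ε Z a i| ≤ √(1 / ε) :=
  Real.abs_le_sqrt (ridgeFactor_sq_le hε Z a i)

variable [DecidableEq m]

theorem ridgeFactor_eq_ridgeInv_mul (hε : 0 < ε) (Z : Matrix m n ℝ) :
    ridgeFactor ε Z = ridgeInv ε (Z * Zᵀ) * Z := by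
  have hcomm : (Z * Zᵀ + ε • (1 : Matrix m m ℝ)) * Z = Z * (Zᵀ * Z + ε • (1 : Matrix n n ℝ)) := by
    simp only [Matrix.add_mul, Matrix.mul_add, Matrix.smul_mul, Matrix.mul_smul, Matrix.one_mul,
      Matrix.mul_one, Matrix.mul_assoc]
  calc ridgeFactor ε Z
      = ridgeInv ε (Z * Zᵀ) * ((Z * Zᵀ + ε • (1 : Matrix m m ℝ)) * Z) * ridgeInv ε (Zᵀ * Z) := by
        rw [← Matrix.mul_assoc,
          ridgeInv_mul_add_smul_one (posSemidef_self_mul_transpose Z) hε, Matrix.one_mul,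
          ridgeFactor]
    _ = ridgeInv ε (Z * Zᵀ) * Z := by
        rw [hcomm, ← Matrix.mul_assoc, Matrix.mul_assoc,
          add_smul_one_mul_ridgeInv (posSemidef_transpose_mul_self Z) hε, Matrix.mul_one]

theorem ridgeFactor_mul_transpose (hε : 0 < ε) (Z : Matrix m n ℝ) :
    ridgeFactor ε Z * (ridgeFactor ε Z)ᵀ = tikhonovInv ε (Z * Zᵀ) := by
  rw [ridgeFactor_eq_ridgeInv_mul hε, transpose_mul,
    transpose_ridgeInv (posSemidef_self_mul_transpose Z) hε, tikhonovInv]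
  simp only [Matrix.mul_assoc]

theorem trace_tikhonovInv_mul_transpose_le (hε : 0 < ε) (Z : Matrix m n ℝ) :
    (tikhonovInv ε (Z * Zᵀ)).trace ≤ (ridgeInv ε (Zᵀ * Z)).trace := by
  rw [← ridgeFactor_mul_transpose hε, trace_mul_comm, transpose_mul_ridgeFactor hε,
    ← sub_nonneg, ← trace_sub]
  exact (posSemidef_ridgeInv_sub_tikhonovInv (posSemidef_transpose_mul_self Z) hε).trace_nonneg

theorem smul_trace_ridgeInv_mul_transpose (hε : 0 < ε) (Z : Matrix m n ℝ) :
    ε * (ridgeInv ε (Z * Zᵀ)).trace =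
      Fintype.card m - Fintype.card n + ε * (ridgeInv ε (Zᵀ * Z)).trace := by
  have h := trace_transpose_mul_ridgeFactor hε Z
  rw [ridgeFactor_eq_ridgeInv_mul hε, trace_mul_comm, Matrix.mul_assoc,
    ridgeInv_mul (posSemidef_self_mul_transpose Z) hε] at h
  simp only [trace_sub, trace_one, trace_smul, smul_eq_mul] at h
  linarith

theorem ridgeFactor_sub_ridgeFactor (hε : 0 < ε) (Y Z : Matrix m n ℝ) :
    ridgeFactor ε Y - ridgeFactor ε Z =
      ε • (ridgeInv ε (Y * Yᵀ) * (Y - Z) * ridgeInv ε (Zᵀ * Z)) -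
        ridgeFactor ε Y * (Y - Z)ᵀ * ridgeFactor ε Z := by
  set R := ridgeInv ε (Y * Yᵀ) with hR
  set G := ridgeInv ε (Zᵀ * Z) with hG
  have hY : Y * (Zᵀ * Z + ε • (1 : Matrix n n ℝ)) - (Y * Yᵀ + ε • (1 : Matrix m m ℝ)) * Z =
      ε • (Y - Z) - Y * (Y - Z)ᵀ * Z := by
    simp only [Matrix.mul_add, Matrix.add_mul, transpose_sub, Matrix.mul_sub, Matrix.sub_mul,
      Matrix.mul_smul, Matrix.smul_mul, Matrix.mul_one, Matrix.one_mul, Matrix.mul_assoc, smul_sub]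
    abel
  calc ridgeFactor ε Y - ridgeFactor ε Z
      = R * (Y * (Zᵀ * Z + ε • (1 : Matrix n n ℝ)) -
          (Y * Yᵀ + ε • (1 : Matrix m m ℝ)) * Z) * G := by
        rw [Matrix.mul_sub, Matrix.sub_mul, ← Matrix.mul_assoc, Matrix.mul_assoc (R * Y), hG,
          add_smul_one_mul_ridgeInv (posSemidef_transpose_mul_self Z) hε, Matrix.mul_one,
          ← Matrix.mul_assoc R, hR,
          ridgeInv_mul_add_smul_one (posSemidef_self_mul_transpose Y) hε, Matrix.one_mul,
          ridgeFactor_eq_ridgeInv_mul hε, ridgeFactor]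
    _ = _ := by
        rw [hY, ridgeFactor_eq_ridgeInv_mul hε Y, ridgeFactor, ← hR, ← hG]
        simp only [Matrix.mul_sub, Matrix.sub_mul, Matrix.mul_smul, Matrix.smul_mul,
          Matrix.mul_assoc]

/-- The partial derivative of the entry `(a, i)` of `ridgeFactor ε` in the direction of the same
entry, a summand of the divergence of `ridgeFactor ε`. -/
noncomputable def ridgeFactorDeriv (ε : ℝ) (a : m) (i : n) (Z : Matrix m n ℝ) : ℝ :=
  ε * (ridgeInv ε (Z * Zᵀ) a a * ridgeInv ε (Zᵀ * Z) i i) - ridgeFactor ε Z a i ^ 2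

theorem continuous_ridgeFactorDeriv (hε : 0 < ε) (a : m) (i : n) :
    Continuous (ridgeFactorDeriv ε a i) :=
  (((continuous_ridgeInv_mul_transpose hε).matrix_elem a a).mul
    ((continuous_ridgeInv_transpose_mul hε).matrix_elem i i)).const_mul ε |>.sub
    (((continuous_ridgeFactor hε).matrix_elem a i).pow 2)

theorem hasLineDerivAt_ridgeFactor (hε : 0 < ε) (a : m) (i : n) (Z : Matrix m n ℝ) :
    HasLineDerivAt ℝ (fun Y => ridgeFactor ε Y a i) (ridgeFactorDeriv ε a i Z) Z
      (single a i 1) := by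
  let q (Y : Matrix m n ℝ) : ℝ := ε * (ridgeInv ε (Y * Yᵀ) a a * ridgeInv ε (Zᵀ * Z) i i) -
    ridgeFactor ε Y a i * ridgeFactor ε Z a i
  have hq : Continuous fun t : ℝ => q (Z + t • single a i 1) := by
    have hq : Continuous q :=
      ((((continuous_ridgeInv_mul_transpose hε).matrix_elem a a).mul_const _).const_mul ε).sub
        (((continuous_ridgeFactor hε).matrix_elem a i).mul_const _)
    exact hq.comp (by fun_prop)
  -- The exact difference formula spares differentiating the matrix inverse.
  have hslope (t : ℝ) : ridgeFactor ε (Z + t • single a i 1) a i - ridgeFactor ε Z a i =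
      t * q (Z + t • single a i 1) := by
    rw [← Matrix.sub_apply, ridgeFactor_sub_ridgeFactor hε, add_sub_cancel_left]
    simp only [q, transpose_add, transpose_single, smul_single, smul_eq_mul, mul_one,
      Matrix.sub_apply, Matrix.smul_apply, mul_apply, single_apply, ite_and, mul_ite, ite_mul,
      mul_zero, zero_mul, Finset.sum_ite_eq, Finset.mem_univ, if_true]
    ring
  have hlim := (hq.tendsto 0).mono_left (nhdsWithin_le_nhds (s := {0}ᶜ))
  rw [HasLineDerivAt, hasDerivAt_iff_tendsto_slope_zero]
  have hval : q (Z + (0 : ℝ) • single a i 1) = ridgeFactorDeriv ε a i Z := by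
    simp [q, ridgeFactorDeriv, sq]
  rw [← hval]
  refine hlim.congr' (eventually_mem_nhdsWithin.mono fun t ht => ?_)
  simp only [zero_add, zero_smul, add_zero, hslope, smul_eq_mul]
  exact (inv_mul_cancel_left₀ ht _).symm

theorem abs_ridgeFactorDeriv_le (hε : 0 < ε) (a : m) (i : n) (Z : Matrix m n ℝ) :
    |ridgeFactorDeriv ε a i Z| ≤ 1 / ε := by
  have hR := posSemidef_ridgeInv (posSemidef_self_mul_transpose Z) hε
  have hG := posSemidef_ridgeInv (posSemidef_transpose_mul_self Z) hε
  have hRG₀ : 0 ≤ ε * (ridgeInv ε (Z * Zᵀ) a a * ridgeInv ε (Zᵀ * Z) i i) :=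
    mul_nonneg hε.le (mul_nonneg hR.diag_nonneg hG.diag_nonneg)
  have hRG : ε * (ridgeInv ε (Z * Zᵀ) a a * ridgeInv ε (Zᵀ * Z) i i) ≤ 1 / ε :=
    calc _ ≤ ε * (1 / ε * (1 / ε)) := by
          gcongr
          · exact hG.diag_nonneg
          · exact ridgeInv_diag_le (posSemidef_self_mul_transpose Z) hε a
          · exact ridgeInv_diag_le (posSemidef_transpose_mul_self Z) hε i
      _ = 1 / ε := by field_simp
  exact abs_sub_le_of_nonneg_of_le hRG₀ hRG (sq_nonneg _) (ridgeFactor_sq_le hε Z a i)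

theorem le_sum_ridgeFactorDeriv (hε : 0 < ε) (hcard : Fintype.card n ≤ Fintype.card m)
    (Z : Matrix m n ℝ) :
    ((Fintype.card m : ℝ) - Fintype.card n - 1) * (tikhonovInv ε (Z * Zᵀ)).trace ≤
      ∑ a, ∑ i, ridgeFactorDeriv ε a i Z := by
  set g := (ridgeInv ε (Zᵀ * Z)).trace
  set t := (tikhonovInv ε (Z * Zᵀ)).trace with ht
  have hsum : ∑ a, ∑ i, ridgeFactorDeriv ε a i Z =
      ε * (ridgeInv ε (Z * Zᵀ)).trace * g - t := by
    rw [ht, ← ridgeFactor_mul_transpose hε]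
    simp only [ridgeFactorDeriv, Finset.sum_sub_distrib, ← Finset.mul_sum, g, trace, diag_apply,
      mul_apply, transpose_apply, sq, mul_assoc, Finset.sum_mul]
  have hg : 0 ≤ g := (posSemidef_ridgeInv (posSemidef_transpose_mul_self Z) hε).trace_nonneg
  have htg : t ≤ g := trace_tikhonovInv_mul_transpose_le hε Z
  have hcard' : (0 : ℝ) ≤ Fintype.card m - Fintype.card n := by simpa using hcard
  rw [hsum, smul_trace_ridgeInv_mul_transpose hε Z]
  calc ((Fintype.card m : ℝ) - Fintype.card n - 1) * t
      = (Fintype.card m - Fintype.card n) * t - t := by ring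
    _ ≤ (Fintype.card m - Fintype.card n) * g - t := by gcongr
    _ ≤ (Fintype.card m - Fintype.card n + ε * g) * g - t := by
        gcongr
        exact le_add_of_nonneg_right (mul_nonneg hε.le hg)

end RidgeFactor

namespace IsMoorePenrose

variable {d : ℕ} {A B : Matrix (Fin d) (Fin d) ℝ} {ε : ℝ}

theorem mul_transpose_eq_mul (hAB : IsMoorePenrose A B) (hA : Aᵀ = A) : A * Bᵀ = B * A := by
  rw [← hAB.2.2.2, transpose_mul, hA]

theorem mul_mul_self_of_transpose_eq (hAB : IsMoorePenrose A B) (hA : Aᵀ = A) :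
    B * A * A = A := by
  have h := congrArg transpose hAB.1
  rwa [transpose_mul, transpose_mul, hA, ← Matrix.mul_assoc, hAB.mul_transpose_eq_mul hA] at h

theorem trace_eq_trace_mul_add (hAB : IsMoorePenrose A B) (hA : Aᵀ = A)
    (Y : Matrix (Fin d) (Fin d) ℝ) :
    B.trace = (B * A * Y).trace + (B * (A - A * Y * A) * Bᵀ).trace := by
  have hBA : B * A * Bᵀ = B * (B * A) := by
    rw [Matrix.mul_assoc, hAB.mul_transpose_eq_mul hA]
  have hB : (B * A * Bᵀ).trace = B.trace := by rw [hBA, trace_mul_comm, hAB.2.1]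
  have hY : (B * (A * Y * A) * Bᵀ).trace = (B * A * Y).trace :=
    calc (B * (A * Y * A) * Bᵀ).trace = (B * A * Y * (B * A)).trace := by
          simp only [Matrix.mul_assoc, hAB.mul_transpose_eq_mul hA]
      _ = (B * A * Y).trace := by
          rw [trace_mul_comm, ← Matrix.mul_assoc, ← Matrix.mul_assoc, hAB.2.1]
  rw [Matrix.mul_sub, Matrix.sub_mul, trace_sub, hB, hY]
  ring

theorem trace_mul_le (hAB : IsMoorePenrose A B) {Y : Matrix (Fin d) (Fin d) ℝ}
    (hY : Y.PosSemidef) : (B * A * Y).trace ≤ Y.trace := by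
  have hsq : B * A * (B * A) = B * A := by rw [← Matrix.mul_assoc, hAB.2.1]
  have hidem : (1 - B * A)ᴴ * (1 - B * A) = 1 - B * A := by
    rw [conjTranspose_eq_transpose_of_trivial, transpose_sub, transpose_one, hAB.2.2.2]
    simp [Matrix.mul_sub, Matrix.sub_mul, hsq]
  have h := (hY.mul_mul_conjTranspose_same (1 - B * A)).trace_nonneg
  rwa [trace_mul_comm, ← Matrix.mul_assoc, hidem, Matrix.sub_mul, Matrix.one_mul, trace_sub,
    sub_nonneg] at h

theorem trace_nonneg (hAB : IsMoorePenrose A B) (hA : A.PosSemidef) : 0 ≤ B.trace := by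
  have h := hAB.trace_eq_trace_mul_add (by simpa using hA.isHermitian.eq) 0
  rw [Matrix.mul_zero, trace_zero, zero_add, Matrix.mul_zero, Matrix.zero_mul, sub_zero] at h
  simpa only [h, conjTranspose_eq_transpose_of_trivial]
    using (hA.mul_mul_conjTranspose_same B).trace_nonneg

theorem trace_tikhonovInv_le (hAB : IsMoorePenrose A B) (hA : A.PosSemidef) (hε : 0 < ε) :
    (tikhonovInv ε A).trace ≤ B.trace := by
  have hA' : Aᵀ = A := by simpa using hA.isHermitian.eq
  have hT : B * A * tikhonovInv ε A = tikhonovInv ε A := by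
    have hcomm : ridgeInv ε A * A = A * ridgeInv ε A := by
      rw [ridgeInv_mul hA hε, mul_ridgeInv hA hε]
    rw [tikhonovInv, hcomm]
    simp only [← Matrix.mul_assoc, hAB.mul_mul_self_of_transpose_eq hA']
  have h := hAB.trace_eq_trace_mul_add hA' (tikhonovInv ε A)
  rw [hT] at h
  rw [h, le_add_iff_nonneg_right]
  simpa only [conjTranspose_eq_transpose_of_trivial]
    using ((posSemidef_sub_mul_tikhonovInv_mul hA hε).mul_mul_conjTranspose_same B).trace_nonneg

theorem trace_le_trace_tikhonovInv_conj_add {S L M : Matrix (Fin d) (Fin d) ℝ}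
    (hB : IsMoorePenrose (L * S * Lᵀ) B) (hS : S.PosSemidef) (hML : M * L = 1) (hε : 0 < ε) :
    B.trace ≤ (Mᵀ * tikhonovInv ε S * M).trace + 2 * ε * (B * L * (B * L)ᵀ).trace := by
  set T := tikhonovInv ε S
  have hA : (L * S * Lᵀ)ᵀ = L * S * Lᵀ := by
    simpa using (hS.mul_mul_conjTranspose_same L).isHermitian.eq
  have hT : (Mᵀ * T * M).PosSemidef := by
    simpa using (posSemidef_tikhonovInv hS hε).conjTranspose_mul_mul_same M
  have hML' : Lᵀ * Mᵀ = 1 := by rw [← transpose_mul, hML, transpose_one]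
  have hres : L * S * Lᵀ - L * S * Lᵀ * (Mᵀ * T * M) * (L * S * Lᵀ) = L * (S - S * T * S) * Lᵀ := by
    have h : L * S * Lᵀ * (Mᵀ * T * M) * (L * S * Lᵀ) =
        L * S * (Lᵀ * Mᵀ) * T * (M * L) * S * Lᵀ := by simp only [Matrix.mul_assoc]
    rw [h, hML, hML']
    simp only [Matrix.mul_sub, Matrix.sub_mul, Matrix.mul_one, Matrix.mul_assoc]
  have hbound : (B * (L * (S - S * T * S) * Lᵀ) * Bᵀ).trace ≤
      2 * ε * (B * L * (B * L)ᵀ).trace := by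
    have h := ((posSemidef_smul_one_sub_sub_mul_tikhonovInv_mul hS hε).mul_mul_conjTranspose_same
      (B * L)).trace_nonneg
    rw [conjTranspose_eq_transpose_of_trivial, Matrix.mul_sub, Matrix.sub_mul, trace_sub,
      Matrix.mul_smul, Matrix.mul_one, Matrix.smul_mul, trace_smul, smul_eq_mul, sub_nonneg] at h
    simpa only [transpose_mul, Matrix.mul_assoc] using h
  rw [hB.trace_eq_trace_mul_add hA (Mᵀ * T * M), hres]
  exact add_le_add (hB.trace_mul_le hT) hbound

open Filter Topology in
theorem tendsto_trace_tikhonovInv (hAB : IsMoorePenrose A B) (hA : A.PosSemidef) :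
    Tendsto (fun ε => (tikhonovInv ε A).trace) (𝓝[>] 0) (𝓝 B.trace) := by
  have hlower : Tendsto (fun ε : ℝ => B.trace - 2 * ε * (B * Bᵀ).trace) (𝓝[>] 0)
      (𝓝 B.trace) := by
    have h : Continuous fun ε : ℝ => B.trace - 2 * ε * (B * Bᵀ).trace := by fun_prop
    simpa using (h.tendsto 0).mono_left nhdsWithin_le_nhds
  refine tendsto_of_tendsto_of_tendsto_of_le_of_le' hlower tendsto_const_nhds ?_ ?_
  · filter_upwards [self_mem_nhdsWithin] with ε hε
    have h := trace_le_trace_tikhonovInv_conj_add (L := 1) (M := 1) (B := B)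
      (by simpa using hAB) hA (one_mul 1) hε
    simp only [transpose_one, Matrix.one_mul, Matrix.mul_one] at h
    linarith
  · filter_upwards [self_mem_nhdsWithin] with ε hε using hAB.trace_tikhonovInv_le hA hε

end IsMoorePenrose

section SteinIdentity

theorem hasDerivAt_gaussianPDFReal_zero_one (x : ℝ) :
    HasDerivAt (gaussianPDFReal 0 1) (-(x * gaussianPDFReal 0 1 x)) x := by
  have hpdf : gaussianPDFReal 0 1 = fun x : ℝ => (√(2 * Real.pi))⁻¹ * Real.exp (-x ^ 2 / 2) := by
    ext x
    simp [gaussianPDFReal]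
  have hexponent : HasDerivAt (fun x : ℝ => -x ^ 2 / 2) (-x) x :=
    ((hasDerivAt_pow 2 x).fun_neg.div_const 2).congr_deriv (by ring)
  rw [hpdf]
  exact (hexponent.exp.const_mul (√(2 * Real.pi))⁻¹).congr_deriv (by ring)

theorem integrable_gaussianReal_iff {f : ℝ → ℝ} {m : ℝ} {v : NNReal} (hv : v ≠ 0) :
    Integrable f (gaussianReal m v) ↔ Integrable fun x => gaussianPDFReal m v x * f x := by
  rw [gaussianReal_of_var_ne_zero _ hv, integrable_withDensity_iff_integrable_smul'
    (measurable_gaussianPDF m v) (.of_forall fun _ => gaussianPDF_lt_top)]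
  simp [toReal_gaussianPDF]

theorem integral_id_mul_gaussianReal_eq_integral_deriv {f f' : ℝ → ℝ}
    (hf : ∀ x, HasDerivAt f (f' x) x) (hint : Integrable f (gaussianReal 0 1))
    (hint_mul : Integrable (fun x => x * f x) (gaussianReal 0 1))
    (hint' : Integrable f' (gaussianReal 0 1)) :
    ∫ x, x * f x ∂(gaussianReal 0 1) = ∫ x, f' x ∂(gaussianReal 0 1) := by
  rw [integrable_gaussianReal_iff one_ne_zero] at hint hint_mul hint'
  have hparts := integral_mul_deriv_eq_deriv_mul_of_integrable
    (fun x _ => hasDerivAt_gaussianPDFReal_zero_one x) (fun x _ => hf x) hint'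
    (hint_mul.neg.congr (.of_forall fun x => by simp only [Pi.neg_apply, Pi.mul_apply]; ring)) hint
  simp only [integral_gaussianReal_eq_integral_smul one_ne_zero, smul_eq_mul]
  rw [hparts, ← integral_neg]
  congr 1 with x
  ring

variable {ι : Type*} [DecidableEq ι]

theorem hasDerivAt_comp_update {F : (ι → ℝ) → ℝ} {F' t : ℝ} {k : ι} {z : ι → ℝ}
    (hF : HasLineDerivAt ℝ F F' (Function.update z k t) (Pi.single k 1)) :
    HasDerivAt (fun s => F (Function.update z k s)) F' t := by
  have hline : HasDerivAt (fun s => F (Function.update z k t + s • Pi.single k 1)) F' (t - t) := by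
    rw [sub_self]
    exact hF
  refine (hline.comp_sub_const t t).congr_of_eventuallyEq (.of_forall fun s => ?_)
  refine congrArg F (funext fun j => ?_)
  rcases eq_or_ne j k with rfl | hj
  · simp
  · simp [hj]

variable [Fintype ι]

theorem measurePreserving_update {α : ι → Type*} [∀ i, MeasurableSpace (α i)]
    (ν : ∀ i, Measure (α i)) [∀ i, IsProbabilityMeasure (ν i)] (k : ι) :
    MeasurePreserving (fun p : (∀ i, α i) × α k => Function.update p.1 k p.2)
      ((Measure.pi ν).prod (ν k)) (Measure.pi ν) := by
  refine ⟨measurable_update', (Measure.pi_eq fun s hs => ?_).symm⟩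
  have hpreimage : (fun p : (∀ i, α i) × α k => Function.update p.1 k p.2) ⁻¹' Set.univ.pi s =
      Set.univ.pi (Function.update s k Set.univ) ×ˢ s k := by
    ext ⟨z, t⟩
    simp only [Set.mem_preimage, Set.mem_univ_pi, Set.mem_prod]
    rw [Function.forall_update_iff z fun j x => x ∈ s j,
      Function.forall_update_iff s fun j u => z j ∈ u]
    simp [and_comm]
  rw [Measure.map_apply measurable_update' (.univ_pi hs), hpreimage, Measure.prod_prod,
    Measure.pi_pi, ← Finset.prod_erase_mul _ _ (Finset.mem_univ k),
    ← Finset.prod_erase_mul _ (fun i => ν i (s i)) (Finset.mem_univ k)]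
  simp only [Function.update_self, measure_univ, mul_one]
  congr 1
  exact Finset.prod_congr rfl fun j hj => by rw [Function.update_of_ne (Finset.ne_of_mem_erase hj)]

theorem integral_pi_eq_integral_integral_update {α : ι → Type*} [∀ i, MeasurableSpace (α i)]
    {E : Type*} [NormedAddCommGroup E] [NormedSpace ℝ E]
    (ν : ∀ i, Measure (α i)) [∀ i, IsProbabilityMeasure (ν i)] (k : ι) {g : (∀ i, α i) → E}
    (hg : Integrable g (Measure.pi ν)) :
    ∫ z, g z ∂(Measure.pi ν) = ∫ z, ∫ t, g (Function.update z k t) ∂(ν k) ∂(Measure.pi ν) := by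
  have hupdate := measurePreserving_update ν k
  conv_lhs => rw [← hupdate.map_eq]
  rw [integral_map hupdate.aemeasurable (by rw [hupdate.map_eq]; exact hg.aestronglyMeasurable)]
  exact integral_prod _ (hupdate.integrable_comp_of_integrable hg)

theorem integral_apply_mul_pi_gaussianReal_eq_integral_lineDeriv (k : ι)
    {F F' : (ι → ℝ) → ℝ} (hF : ∀ z, HasLineDerivAt ℝ F (F' z) z (Pi.single k 1))
    (hint : Integrable F (Measure.pi fun _ => gaussianReal 0 1))
    (hint_mul : Integrable (fun z => z k * F z) (Measure.pi fun _ => gaussianReal 0 1))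
    (hint' : Integrable F' (Measure.pi fun _ => gaussianReal 0 1)) :
    ∫ z, z k * F z ∂(Measure.pi fun _ => gaussianReal 0 1) =
      ∫ z, F' z ∂(Measure.pi fun _ => gaussianReal 0 1) := by
  have hslice {g : (ι → ℝ) → ℝ} (hg : Integrable g (Measure.pi fun _ => gaussianReal 0 1)) :
      ∀ᵐ z ∂(Measure.pi fun _ => gaussianReal 0 1),
        Integrable (fun t => g (Function.update z k t)) (gaussianReal 0 1) :=
    ((measurePreserving_update _ k).integrable_comp_of_integrable hg).prod_right_ae
  rw [integral_pi_eq_integral_integral_update _ k hint_mul,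
    integral_pi_eq_integral_integral_update _ k hint']
  refine integral_congr_ae ?_
  filter_upwards [hslice hint, hslice hint_mul, hslice hint'] with z hz hz_mul hz'
  simp only [Function.update_self] at hz_mul ⊢
  exact integral_id_mul_gaussianReal_eq_integral_deriv
    (fun t => hasDerivAt_comp_update (hF (Function.update z k t))) hz hz_mul hz'

end SteinIdentity

section OrthogonalInvariance

variable {m : Type*} [Fintype m] [DecidableEq m] {C : Matrix m m ℝ}

theorem eq_zero_of_orthogonal_conj_invariant (hC : ∀ U : Matrix m m ℝ, U * Uᵀ = 1 → U * C * Uᵀ = C)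
    {a b : m} (hab : a ≠ b) : C a b = 0 := by
  let D : Matrix m m ℝ := diagonal (Function.update 1 a (-1))
  have hD : D * Dᵀ = 1 := by
    rw [diagonal_transpose, diagonal_mul_diagonal, ← diagonal_one]
    congr 1
    ext c
    by_cases h : c = a <;> simp [h]
  have h := congrFun (congrFun (hC D hD) a) b
  rw [diagonal_transpose, mul_diagonal, diagonal_mul, Function.update_self,
    Function.update_of_ne hab.symm, Pi.one_apply] at h
  linarith

theorem diag_eq_of_orthogonal_conj_invariant
    (hC : ∀ U : Matrix m m ℝ, U * Uᵀ = 1 → U * C * Uᵀ = C) (a b : m) : C a a = C b b := by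
  let U : Matrix m m ℝ := (Equiv.swap b a).permMatrix ℝ
  have hU : U * Uᵀ = 1 := by
    rw [transpose_permMatrix, ← permMatrix_mul, inv_mul_cancel, permMatrix_one]
  have h := congrFun (congrFun (hC U hU) b) b
  rw [transpose_permMatrix, Equiv.Perm.permMatrix,
    PEquiv.toMatrix_toPEquiv_mul, PEquiv.mul_toMatrix_toPEquiv] at h
  simpa using h

theorem eq_smul_one_of_orthogonal_conj_invariant
    (hC : ∀ U : Matrix m m ℝ, U * Uᵀ = 1 → U * C * Uᵀ = C) :
    C = (C.trace / Fintype.card m) • (1 : Matrix m m ℝ) := by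
  ext a b
  rcases eq_or_ne a b with rfl | hab
  · have : Nonempty m := ⟨a⟩
    have htrace : C.trace = Fintype.card m * C a a := by
      simp only [trace, diag_apply, diag_eq_of_orthogonal_conj_invariant hC _ a, Finset.sum_const,
        Finset.card_univ, nsmul_eq_mul]
    simp [htrace]
  · simp [eq_zero_of_orthogonal_conj_invariant hC hab, hab]

end OrthogonalInvariance

open scoped MatrixOrder in
theorem exists_eq_mul_transpose_of_posDef {m : Type*} [Fintype m] [DecidableEq m]
    {S : Matrix m m ℝ} (hS : S.PosDef) :
    ∃ L M : Matrix m m ℝ, M * L = 1 ∧ S = L * Lᵀ ∧ S⁻¹ = Mᵀ * M := by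
  obtain ⟨B, rfl⟩ := CStarAlgebra.nonneg_iff_eq_star_mul_self.1 hS.posSemidef.nonneg
  have hstar : star B = Bᵀ := by
    rw [star_eq_conjTranspose, conjTranspose_eq_transpose_of_trivial]
  have hB : IsUnit Bᵀ.det := by
    have h := (isUnit_iff_isUnit_det _).1 hS.isUnit
    rw [hstar, det_mul] at h
    exact isUnit_of_mul_isUnit_left h
  refine ⟨Bᵀ, Bᵀ⁻¹, nonsing_inv_mul _ hB, by rw [hstar, transpose_transpose], ?_⟩
  rw [hstar, Matrix.mul_inv_rev, transpose_nonsing_inv, transpose_transpose]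

open Filter Topology in
theorem integrable_and_integral_le_of_le_add {Ω : Type*} [MeasurableSpace Ω] {P : Measure Ω}
    {f : Ω → ℝ} {g r : ℕ → Ω → ℝ} {c : ℝ} (hf : AEStronglyMeasurable f P) (hf₀ : ∀ ω, 0 ≤ f ω)
    (hg : ∀ k, Integrable (g k) P) (hg₀ : ∀ k ω, 0 ≤ g k ω) (hgc : ∀ k, ∫ ω, g k ω ∂P ≤ c)
    (hr : ∀ ω, Tendsto (r · ω) atTop (𝓝 0)) (hfg : ∀ k ω, f ω ≤ g k ω + r k ω) :
    Integrable f P ∧ ∫ ω, f ω ∂P ≤ c := by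
  have hc : 0 ≤ c := (integral_nonneg (hg₀ 0)).trans (hgc 0)
  have hliminf (ω : Ω) : ENNReal.ofReal (f ω) ≤ liminf (fun k => ENNReal.ofReal (g k ω)) atTop := by
    have hlim : Tendsto (fun k => ENNReal.ofReal (f ω - r k ω)) atTop (𝓝 (ENNReal.ofReal (f ω))) :=
      ENNReal.tendsto_ofReal (by simpa using (hr ω).const_sub (f ω))
    rw [← hlim.liminf_eq]
    exact liminf_le_liminf (.of_forall fun k =>
      ENNReal.ofReal_le_ofReal (sub_le_iff_le_add.2 (hfg k ω)))
  have hlintegral : ∫⁻ ω, ENNReal.ofReal (f ω) ∂P ≤ ENNReal.ofReal c :=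
    calc ∫⁻ ω, ENNReal.ofReal (f ω) ∂P
        ≤ ∫⁻ ω, liminf (fun k => ENNReal.ofReal (g k ω)) atTop ∂P := lintegral_mono hliminf
      _ ≤ liminf (fun k => ∫⁻ ω, ENNReal.ofReal (g k ω) ∂P) atTop :=
          lintegral_liminf_le' fun k => (hg k).aemeasurable.ennreal_ofReal
      _ ≤ liminf (fun _ : ℕ => ENNReal.ofReal c) atTop :=
          liminf_le_liminf (.of_forall fun k => by
            rw [← ofReal_integral_eq_lintegral_ofReal (hg k) (.of_forall (hg₀ k))]
            exact ENNReal.ofReal_le_ofReal (hgc k))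
      _ = ENNReal.ofReal c := liminf_const _
  refine ⟨(lintegral_ofReal_ne_top_iff_integrable hf (.of_forall hf₀)).1
    (hlintegral.trans_lt ENNReal.ofReal_lt_top).ne, ?_⟩
  rw [integral_eq_lintegral_of_nonneg_ae (.of_forall hf₀) hf]
  exact ENNReal.toReal_le_of_le_ofReal hc hlintegral

section GaussianMatrices

variable {Ω : Type*} [MeasurableSpace Ω] {P : Measure Ω}

theorem hasLaw_pi_gaussianReal_of_dotProduct {ι : Type*} [Fintype ι] {Y : Ω → ι → ℝ}
    (hY : ∀ v, HasLaw (fun ω => v ⬝ᵥ Y ω) (gaussianReal 0 (v ⬝ᵥ v).toNNReal) P) :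
    HasLaw Y (Measure.pi fun _ => gaussianReal 0 1) P := by
  classical
  have hmeas : AEMeasurable Y P :=
    aemeasurable_pi_lambda _ fun i => by simpa using (hY (Pi.single i 1)).aemeasurable
  have := (hY 0).isProbabilityMeasure
  have := Measure.isProbabilityMeasure_map hmeas
  refine ⟨hmeas, charFun_eq_pi_iff.1 fun t => ?_⟩
  have hlaw := hY t.ofLp
  have hvar : ((t.ofLp ⬝ᵥ t.ofLp).toNNReal : ℝ) = t.ofLp ⬝ᵥ t.ofLp :=
    Real.coe_toNNReal _ (dotProduct_self_star_nonneg _)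
  calc charFun ((P.map Y).map (WithLp.toLp 2)) t
      = charFun (P.map fun ω => t.ofLp ⬝ᵥ Y ω) 1 := by
        rw [charFun_apply, charFun_apply_real, integral_map (by fun_prop) (by fun_prop),
          integral_map hmeas (by fun_prop), integral_map hlaw.aemeasurable (by fun_prop)]
        simp [PiLp.inner_apply, dotProduct]
    _ = ∏ i, charFun (gaussianReal 0 1) (t i) := by
        rw [hlaw.map_eq]
        simp only [charFun_gaussianReal, ← Complex.exp_sum]
        rw [hvar]
        simp [dotProduct, Finset.sum_div, sq]

variable {l m n : Type*} [Fintype l] [Fintype m] [Fintype n]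

/-- The columns of the random matrix `X` are independent with law `N(0, S)`, expressed through
the law of the linear functionals `⟨V, X⟩ = tr (Vᵀ X)` of `X`. -/
def HasIIDGaussianColumns (X : Ω → Matrix m n ℝ) (S : Matrix m m ℝ) (P : Measure Ω) : Prop :=
  ∀ V : Matrix m n ℝ,
    HasLaw (fun ω => (Vᵀ * X ω).trace) (gaussianReal 0 (Vᵀ * S * V).trace.toNNReal) P

namespace HasIIDGaussianColumns

variable {X Z : Ω → Matrix m n ℝ} {S : Matrix m m ℝ}

theorem isProbabilityMeasure (hX : HasIIDGaussianColumns X S P) : IsProbabilityMeasure P :=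
  (hX 0).isProbabilityMeasure

theorem mul_left (hX : HasIIDGaussianColumns X S P) (B : Matrix l m ℝ) :
    HasIIDGaussianColumns (fun ω => B * X ω) (B * S * Bᵀ) P := fun V => by
  simpa only [transpose_mul, transpose_transpose, Matrix.mul_assoc] using hX (Bᵀ * V)

theorem integrable_apply (hX : HasIIDGaussianColumns X S P) (a : m) (i : n) :
    Integrable (fun ω => X ω a i) P := by
  classical
  have hlaw := hX (single a i 1)
  simp only [transpose_single, trace_single_mul, one_smul] at hlaw
  have hid : Integrable id (P.map fun ω => X ω a i) := by
    rw [hlaw.map_eq]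
    exact memLp_one_iff_integrable.1 (memLp_id_gaussianReal 1)
  exact hid.comp_aemeasurable hlaw.aemeasurable

theorem aestronglyMeasurable_comp (hX : HasIIDGaussianColumns X S P) {F : Matrix m n ℝ → ℝ}
    (hF : Continuous F) :
    AEStronglyMeasurable (fun ω => F (X ω)) P := by
  have hX' : AEMeasurable (fun ω (p : m × n) => X ω p.1 p.2) P :=
    aemeasurable_pi_lambda _ fun p => (hX.integrable_apply p.1 p.2).aemeasurable
  have hF' : Continuous fun z : m × n → ℝ => F (of fun a i => z (a, i)) :=
    hF.comp (continuous_matrix fun a i => continuous_apply (a, i))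
  exact (hF'.measurable.comp_aemeasurable hX').aestronglyMeasurable

theorem integrable_comp_of_bound (hX : HasIIDGaussianColumns X S P) {F : Matrix m n ℝ → ℝ}
    (hF : Continuous F) {C : ℝ} (hC : ∀ Y, |F Y| ≤ C) : Integrable (fun ω => F (X ω)) P :=
  have := hX.isProbabilityMeasure
  .of_bound (hX.aestronglyMeasurable_comp hF) C (.of_forall fun ω => hC (X ω))

theorem integrable_apply_mul_ridgeFactor [DecidableEq n] (hX : HasIIDGaussianColumns X S P)
    {ε : ℝ} (hε : 0 < ε) (a : m) (i : n) :
    Integrable (fun ω => X ω a i * ridgeFactor ε (X ω) a i) P :=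
  (hX.integrable_apply a i).mul_bdd
    (hX.aestronglyMeasurable_comp ((continuous_ridgeFactor hε).matrix_elem a i))
    (.of_forall fun ω => abs_ridgeFactor_le hε (X ω) a i)

variable [DecidableEq m]

theorem hasLaw_vec (hZ : HasIIDGaussianColumns Z 1 P) :
    HasLaw (fun ω => (Z ω).vec) (Measure.pi fun _ : n × m => gaussianReal 0 1) P := by
  refine hasLaw_pi_gaussianReal_of_dotProduct fun v => ?_
  obtain ⟨V, rfl⟩ := vec_bijective.surjective v
  simpa only [vec_dotProduct_vec, Matrix.mul_one] using hZ V

theorem integral_comp (hZ : HasIIDGaussianColumns Z 1 P) {F : Matrix m n ℝ → ℝ}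
    (hF : Continuous F) :
    ∫ ω, F (Z ω) ∂P =
      ∫ z : n × m → ℝ, F (of fun a i => z (i, a)) ∂(Measure.pi fun _ => gaussianReal 0 1) :=
  hZ.hasLaw_vec.integral_comp (f := fun z => F (of fun a i => z (i, a)))
    (hF.comp (continuous_matrix fun a i => continuous_apply (i, a))).aestronglyMeasurable

theorem integrable_comp_iff (hZ : HasIIDGaussianColumns Z 1 P) {F : Matrix m n ℝ → ℝ}
    (hF : Continuous F) :
    Integrable (fun z : n × m → ℝ => F (of fun a i => z (i, a)))
      (Measure.pi fun _ => gaussianReal 0 1) ↔ Integrable (fun ω => F (Z ω)) P := by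
  rw [← hZ.hasLaw_vec.map_eq]
  exact integrable_map_measure (g := fun z => F (of fun a i => z (i, a)))
    (hF.comp (continuous_matrix fun a i => continuous_apply (i, a))).aestronglyMeasurable
    hZ.hasLaw_vec.aemeasurable

theorem integral_comp_mul_left (hZ : HasIIDGaussianColumns Z 1 P) {U : Matrix m m ℝ}
    (hU : U * Uᵀ = 1) {F : Matrix m n ℝ → ℝ} (hF : Continuous F) :
    ∫ ω, F (U * Z ω) ∂P = ∫ ω, F (Z ω) ∂P := by
  have hUZ : HasIIDGaussianColumns (fun ω => U * Z ω) 1 P := by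
    simpa only [Matrix.mul_one, hU] using hZ.mul_left U
  rw [hUZ.integral_comp hF, hZ.integral_comp hF]

theorem exists_eq_mul_standard (hX : HasIIDGaussianColumns X S P) (hS : S.PosDef) :
    ∃ (L M : Matrix m m ℝ) (Z : Ω → Matrix m n ℝ), M * L = 1 ∧
      S⁻¹ = Mᵀ * M ∧ HasIIDGaussianColumns Z 1 P ∧ ∀ ω, X ω = L * Z ω := by
  obtain ⟨L, M, hML, hSL, hSM⟩ := exists_eq_mul_transpose_of_posDef hS
  have hMSM : M * S * Mᵀ = 1 := by
    rw [hSL, ← Matrix.mul_assoc, hML, Matrix.one_mul, ← transpose_mul, hML, transpose_one]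
  refine ⟨L, M, fun ω => M * X ω, hML, hSM, hMSM ▸ hX.mul_left M, fun ω => ?_⟩
  rw [← Matrix.mul_assoc, mul_eq_one_comm.1 hML, Matrix.one_mul]

theorem integral_apply_mul_eq_integral_lineDeriv [DecidableEq n]
    (hZ : HasIIDGaussianColumns Z 1 P) (a : m) (i : n) {F F' : Matrix m n ℝ → ℝ}
    (hF : Continuous F) (hF' : Continuous F')
    (hderiv : ∀ Y, HasLineDerivAt ℝ F (F' Y) Y (single a i 1))
    (hint : Integrable (fun ω => F (Z ω)) P) (hint_mul : Integrable (fun ω => Z ω a i * F (Z ω)) P)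
    (hint' : Integrable (fun ω => F' (Z ω)) P) :
    ∫ ω, Z ω a i * F (Z ω) ∂P = ∫ ω, F' (Z ω) ∂P := by
  have hmul : Continuous fun Y : Matrix m n ℝ => Y a i * F Y := by fun_prop
  rw [hZ.integral_comp hmul, hZ.integral_comp hF']
  refine integral_apply_mul_pi_gaussianReal_eq_integral_lineDeriv (i, a) (fun z => ?_)
    ((hZ.integrable_comp_iff hF).2 hint) ((hZ.integrable_comp_iff hmul).2 hint_mul)
    ((hZ.integrable_comp_iff hF').2 hint')
  refine HasDerivAt.congr_of_eventuallyEq (hderiv (of fun a i => z (i, a)))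
    (.of_forall fun t => congrArg F ?_)
  ext b j
  rw [← vec_single]
  rfl

variable {ε : ℝ}

theorem integrable_tikhonovInv_apply (hX : HasIIDGaussianColumns X S P) (hε : 0 < ε) (a b : m) :
    Integrable (fun ω => tikhonovInv ε (X ω * (X ω)ᵀ) a b) P := by
  classical
  simp only [← ridgeFactor_mul_transpose hε, mul_apply, transpose_apply]
  refine integrable_finsetSum _ fun i _ => ?_
  refine hX.integrable_comp_of_bound (F := fun Y => ridgeFactor ε Y a i * ridgeFactor ε Y b i)
    (C := √(1 / ε) * √(1 / ε)) ?_ fun Y => ?_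
  · exact ((continuous_ridgeFactor hε).matrix_elem a i).mul
      ((continuous_ridgeFactor hε).matrix_elem b i)
  · rw [abs_mul]
    gcongr <;> exact abs_ridgeFactor_le hε Y _ i

theorem integral_tikhonovInv_conj_invariant (hZ : HasIIDGaussianColumns Z 1 P) (hε : 0 < ε)
    {U : Matrix m m ℝ} (hU : U * Uᵀ = 1) :
    U * (of fun a b => ∫ ω, tikhonovInv ε (Z ω * (Z ω)ᵀ) a b ∂P) * Uᵀ =
      of fun a b => ∫ ω, tikhonovInv ε (Z ω * (Z ω)ᵀ) a b ∂P := by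
  have hint := hZ.integrable_tikhonovInv_apply hε
  ext a b
  calc (U * (of fun a b => ∫ ω, tikhonovInv ε (Z ω * (Z ω)ᵀ) a b ∂P) * Uᵀ) a b
      = ∫ ω, (U * tikhonovInv ε (Z ω * (Z ω)ᵀ) * Uᵀ) a b ∂P := by
        simp only [mul_apply, of_apply]
        rw [integral_finsetSum _ fun c _ =>
          (integrable_finsetSum _ fun d _ => (hint d c).const_mul _).mul_const _]
        refine Finset.sum_congr rfl fun c _ => ?_
        rw [integral_mul_const, integral_finsetSum _ fun d _ => (hint d c).const_mul _]
        simp only [integral_const_mul]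
    _ = ∫ ω, tikhonovInv ε (U * Z ω * (U * Z ω)ᵀ) a b ∂P := by
        refine integral_congr_ae (.of_forall fun ω => ?_)
        simp only [transpose_mul, ← tikhonovInv_conj (posSemidef_self_mul_transpose (Z ω)) hε hU,
          Matrix.mul_assoc]
    _ = ∫ ω, tikhonovInv ε (Z ω * (Z ω)ᵀ) a b ∂P :=
        hZ.integral_comp_mul_left hU (F := fun Y => tikhonovInv ε (Y * Yᵀ) a b)
          ((continuous_tikhonovInv_mul_transpose hε).matrix_elem a b)

theorem integrable_trace_mul_tikhonovInv (hX : HasIIDGaussianColumns X S P) (hε : 0 < ε)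
    (C : Matrix m m ℝ) : Integrable (fun ω => (C * tikhonovInv ε (X ω * (X ω)ᵀ)).trace) P := by
  simp only [trace, diag_apply, mul_apply]
  exact integrable_finsetSum _ fun a _ => integrable_finsetSum _ fun b _ =>
    (hX.integrable_tikhonovInv_apply hε b a).const_mul _

theorem integral_trace_mul_tikhonovInv (hX : HasIIDGaussianColumns X S P) (hε : 0 < ε)
    (C : Matrix m m ℝ) :
    ∫ ω, (C * tikhonovInv ε (X ω * (X ω)ᵀ)).trace ∂P =
      (C * of fun a b => ∫ ω, tikhonovInv ε (X ω * (X ω)ᵀ) a b ∂P).trace := by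
  have hint (a b : m) : Integrable (fun ω => C a b * tikhonovInv ε (X ω * (X ω)ᵀ) b a) P :=
    (hX.integrable_tikhonovInv_apply hε b a).const_mul (C a b)
  calc ∫ ω, (C * tikhonovInv ε (X ω * (X ω)ᵀ)).trace ∂P
      = ∫ ω, ∑ a, ∑ b, C a b * tikhonovInv ε (X ω * (X ω)ᵀ) b a ∂P := rfl
    _ = ∑ a, ∑ b, C a b * ∫ ω, tikhonovInv ε (X ω * (X ω)ᵀ) b a ∂P := by
        rw [integral_finsetSum _ fun a _ => integrable_finsetSum _ fun b _ => hint a b]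
        refine Finset.sum_congr rfl fun a _ => ?_
        rw [integral_finsetSum _ fun b _ => hint a b]
        simp only [integral_const_mul]
    _ = (C * of fun a b => ∫ ω, tikhonovInv ε (X ω * (X ω)ᵀ) a b ∂P).trace := rfl

theorem integral_trace_mul_tikhonovInv_eq_trace_mul (hZ : HasIIDGaussianColumns Z 1 P)
    (hε : 0 < ε) (C : Matrix m m ℝ) :
    ∫ ω, (C * tikhonovInv ε (Z ω * (Z ω)ᵀ)).trace ∂P =
      C.trace * ((∫ ω, (tikhonovInv ε (Z ω * (Z ω)ᵀ)).trace ∂P) / Fintype.card m) := by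
  have htrace := hZ.integral_trace_mul_tikhonovInv hε 1
  simp only [Matrix.one_mul] at htrace
  have hscalar := eq_smul_one_of_orthogonal_conj_invariant
    fun U hU => hZ.integral_tikhonovInv_conj_invariant hε (U := U) hU
  rw [hZ.integral_trace_mul_tikhonovInv hε, htrace]
  conv_lhs => rw [hscalar]
  rw [Matrix.mul_smul, trace_smul, Matrix.mul_one, smul_eq_mul, mul_comm]

theorem integrable_ridgeFactorDeriv [DecidableEq n] (hX : HasIIDGaussianColumns X S P)
    (hε : 0 < ε) (a : m) (i : n) :
    Integrable (fun ω => ridgeFactorDeriv ε a i (X ω)) P :=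
  hX.integrable_comp_of_bound (continuous_ridgeFactorDeriv hε a i) (abs_ridgeFactorDeriv_le hε a i)

theorem integral_trace_transpose_mul_ridgeFactor [DecidableEq n]
    (hZ : HasIIDGaussianColumns Z 1 P) (hε : 0 < ε) :
    ∫ ω, ((Z ω)ᵀ * ridgeFactor ε (Z ω)).trace ∂P =
      ∫ ω, ∑ a, ∑ i, ridgeFactorDeriv ε a i (Z ω) ∂P := by
  have hint := hZ.integrable_apply_mul_ridgeFactor hε
  have hint' := hZ.integrable_ridgeFactorDeriv hε
  have hstein (a : m) (i : n) :
      ∫ ω, Z ω a i * ridgeFactor ε (Z ω) a i ∂P = ∫ ω, ridgeFactorDeriv ε a i (Z ω) ∂P :=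
    have hcont := (continuous_ridgeFactor hε).matrix_elem a i
    hZ.integral_apply_mul_eq_integral_lineDeriv a i hcont (continuous_ridgeFactorDeriv hε a i)
      (hasLineDerivAt_ridgeFactor hε a i)
      (hZ.integrable_comp_of_bound hcont fun Y => abs_ridgeFactor_le hε Y a i)
      (hint a i) (hint' a i)
  calc ∫ ω, ((Z ω)ᵀ * ridgeFactor ε (Z ω)).trace ∂P
      = ∫ ω, ∑ i, ∑ a, Z ω a i * ridgeFactor ε (Z ω) a i ∂P := rfl
    _ = ∑ i, ∑ a, ∫ ω, Z ω a i * ridgeFactor ε (Z ω) a i ∂P := by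
        rw [integral_finsetSum _ fun i _ => integrable_finsetSum _ fun a _ => hint a i]
        exact Finset.sum_congr rfl fun i _ => integral_finsetSum _ fun a _ => hint a i
    _ = ∑ a, ∑ i, ∫ ω, ridgeFactorDeriv ε a i (Z ω) ∂P := by
        simp only [hstein]
        exact Finset.sum_comm
    _ = ∫ ω, ∑ a, ∑ i, ridgeFactorDeriv ε a i (Z ω) ∂P := by
        rw [integral_finsetSum _ fun a _ => integrable_finsetSum _ fun i _ => hint' a i]
        exact Finset.sum_congr rfl fun a _ => (integral_finsetSum _ fun i _ => hint' a i).symm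

theorem mul_integral_trace_tikhonovInv_le (hZ : HasIIDGaussianColumns Z 1 P) (hε : 0 < ε)
    (hcard : Fintype.card n ≤ Fintype.card m) :
    ((Fintype.card m : ℝ) - Fintype.card n - 1) *
      ∫ ω, (tikhonovInv ε (Z ω * (Z ω)ᵀ)).trace ∂P ≤ Fintype.card n := by
  classical
  have := hZ.isProbabilityMeasure
  have hbound (Y : Matrix m n ℝ) : (Yᵀ * ridgeFactor ε Y).trace ≤ Fintype.card n := by
    rw [trace_transpose_mul_ridgeFactor hε, sub_le_self_iff]
    exact mul_nonneg hε.le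
      (posSemidef_ridgeInv (posSemidef_transpose_mul_self Y) hε).trace_nonneg
  have hint : Integrable (fun ω => (tikhonovInv ε (Z ω * (Z ω)ᵀ)).trace) P := by
    simpa only [Matrix.one_mul] using hZ.integrable_trace_mul_tikhonovInv hε 1
  have hint_trace : Integrable (fun ω => ((Z ω)ᵀ * ridgeFactor ε (Z ω)).trace) P :=
    integrable_finsetSum _ fun i _ => integrable_finsetSum _ fun a _ =>
      hZ.integrable_apply_mul_ridgeFactor hε a i
  have hint_deriv : Integrable (fun ω => ∑ a, ∑ i, ridgeFactorDeriv ε a i (Z ω)) P :=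
    integrable_finsetSum _ fun a _ => integrable_finsetSum _ fun i _ =>
      hZ.integrable_ridgeFactorDeriv hε a i
  calc ((Fintype.card m : ℝ) - Fintype.card n - 1) *
        ∫ ω, (tikhonovInv ε (Z ω * (Z ω)ᵀ)).trace ∂P
      = ∫ ω, ((Fintype.card m : ℝ) - Fintype.card n - 1) *
          (tikhonovInv ε (Z ω * (Z ω)ᵀ)).trace ∂P := (integral_const_mul _ _).symm
    _ ≤ ∫ ω, ∑ a, ∑ i, ridgeFactorDeriv ε a i (Z ω) ∂P :=
        integral_mono (hint.const_mul _) hint_deriv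
          fun ω => le_sum_ridgeFactorDeriv hε hcard (Z ω)
    _ = ∫ ω, ((Z ω)ᵀ * ridgeFactor ε (Z ω)).trace ∂P :=
        (hZ.integral_trace_transpose_mul_ridgeFactor hε).symm
    _ ≤ ∫ _, (Fintype.card n : ℝ) ∂P :=
        integral_mono hint_trace (integrable_const _) fun ω => hbound (Z ω)
    _ = Fintype.card n := by simp

theorem integral_trace_mul_tikhonovInv_le (hZ : HasIIDGaussianColumns Z 1 P) (hε : 0 < ε)
    (hcard : Fintype.card n + 1 < Fintype.card m) {C : Matrix m m ℝ} (hC : 0 ≤ C.trace) :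
    ∫ ω, (C * tikhonovInv ε (Z ω * (Z ω)ᵀ)).trace ∂P ≤
      (Fintype.card n : ℝ) / (Fintype.card m * (Fintype.card m - Fintype.card n - 1)) *
        C.trace := by
  have hgap : (0 : ℝ) < Fintype.card m - Fintype.card n - 1 := by
    have : (Fintype.card n + 1 : ℝ) < Fintype.card m := mod_cast hcard
    linarith
  have hle := hZ.mul_integral_trace_tikhonovInv_le hε (by lia)
  rw [← le_div_iff₀' hgap] at hle
  rw [hZ.integral_trace_mul_tikhonovInv_eq_trace_mul hε, mul_comm, mul_comm (Fintype.card m : ℝ),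
    ← div_div]
  gcongr

end HasIIDGaussianColumns

end GaussianMatrices

section SingularWishart

variable {Ω : Type*} [MeasurableSpace Ω] {P : Measure Ω} {n : Type*} [Fintype n] {d : ℕ}
  {X : Ω → Matrix (Fin d) n ℝ} {S : Matrix (Fin d) (Fin d) ℝ} {B : Ω → Matrix (Fin d) (Fin d) ℝ}

open Filter Topology

namespace HasIIDGaussianColumns

theorem aestronglyMeasurable_trace_of_isMoorePenrose (hX : HasIIDGaussianColumns X S P)
    (hB : ∀ ω, IsMoorePenrose (X ω * (X ω)ᵀ) (B ω)) :
    AEStronglyMeasurable (fun ω => (B ω).trace) P := by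
  classical
  have hε (k : ℕ) : (0 : ℝ) < 1 / (k + 1) := Nat.one_div_pos_of_nat
  have hlim : Tendsto (fun k : ℕ => (1 : ℝ) / (k + 1)) atTop (𝓝[>] 0) :=
    tendsto_nhdsWithin_iff.2 ⟨tendsto_one_div_add_atTop_nhds_zero_nat, .of_forall hε⟩
  refine aestronglyMeasurable_of_tendsto_ae atTop
    (f := fun (k : ℕ) ω => (tikhonovInv (1 / (k + 1)) (X ω * (X ω)ᵀ)).trace) (fun k => ?_)
    (.of_forall fun ω =>
      ((hB ω).tendsto_trace_tikhonovInv (posSemidef_self_mul_transpose (X ω))).comp hlim)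
  exact hX.aestronglyMeasurable_comp (F := fun Y => (tikhonovInv (1 / (k + 1)) (Y * Yᵀ)).trace)
    (continuous_tikhonovInv_mul_transpose (hε k)).matrix_trace

theorem integrable_and_integral_trace_le_of_isMoorePenrose (hX : HasIIDGaussianColumns X S P)
    (hS : S.PosDef) (hcard : Fintype.card n + 1 < d)
    (hB : ∀ ω, IsMoorePenrose (X ω * (X ω)ᵀ) (B ω)) :
    Integrable (fun ω => (B ω).trace) P ∧
      ∫ ω, (B ω).trace ∂P ≤ (Fintype.card n : ℝ) / (d * (d - Fintype.card n - 1)) * S⁻¹.trace := by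
  classical
  obtain ⟨L, M, Z, hML, hSM, hZ, hXZ⟩ := hX.exists_eq_mul_standard hS
  have hgram (ω : Ω) : X ω * (X ω)ᵀ = L * (Z ω * (Z ω)ᵀ) * Lᵀ := by
    rw [hXZ, transpose_mul]
    simp only [Matrix.mul_assoc]
  have hZZ (ω : Ω) := posSemidef_self_mul_transpose (Z ω)
  have hε (k : ℕ) : (0 : ℝ) < 1 / (k + 1) := Nat.one_div_pos_of_nat
  have hcycle (T : Matrix (Fin d) (Fin d) ℝ) : (Mᵀ * T * M).trace = (M * Mᵀ * T).trace := by
    rw [trace_mul_comm, Matrix.mul_assoc M]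
  have htrace : (M * Mᵀ).trace = S⁻¹.trace := by rw [hSM, trace_mul_comm]
  refine integrable_and_integral_le_of_le_add
    (g := fun k ω => (Mᵀ * tikhonovInv (1 / (k + 1)) (Z ω * (Z ω)ᵀ) * M).trace)
    (r := fun k ω => 2 * (1 / (k + 1)) * (B ω * L * (B ω * L)ᵀ).trace)
    (hX.aestronglyMeasurable_trace_of_isMoorePenrose hB)
    (fun ω => (hB ω).trace_nonneg (posSemidef_self_mul_transpose (X ω))) (fun k => ?_)
    (fun k ω => ?_) (fun k => ?_) (fun ω => ?_) fun k ω => ?_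
  · simpa only [hcycle] using hZ.integrable_trace_mul_tikhonovInv (hε k) (M * Mᵀ)
  · simpa only [conjTranspose_eq_transpose_of_trivial] using
      ((posSemidef_tikhonovInv (hZZ ω) (hε k)).conjTranspose_mul_mul_same M).trace_nonneg
  · have h := hZ.integral_trace_mul_tikhonovInv_le (hε k) (by simpa using hcard)
      (posSemidef_self_mul_transpose M).trace_nonneg
    simpa only [hcycle, htrace, Fintype.card_fin] using h
  · simpa only [mul_zero, zero_mul] using
      ((tendsto_one_div_add_atTop_nhds_zero_nat (𝕜 := ℝ)).const_mul 2).mul_const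
        (B ω * L * (B ω * L)ᵀ).trace
  · exact IsMoorePenrose.trace_le_trace_tikhonovInv_conj_add (hgram ω ▸ hB ω) (hZZ ω) hML (hε k)

end HasIIDGaussianColumns

end SingularWishart

theorem hasIIDGaussianColumns_of_map_sum_dotProduct {Ω : Type*} [MeasurableSpace Ω]
    {P : Measure Ω} {m n : Type*} [Fintype m] [Fintype n] {S : Matrix m m ℝ} {x : n → Ω → m → ℝ}
    (hx : ∀ v : n → m → ℝ, P.map (fun ω => ∑ i, v i ⬝ᵥ x i ω) =
      gaussianReal 0 (∑ i, v i ⬝ᵥ S *ᵥ v i).toNNReal) :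
    HasIIDGaussianColumns (fun ω => (of fun i => x i ω)ᵀ) S P := fun V => by
  have hvar : (Vᵀ * S * V).trace = ∑ i, Vᵀ i ⬝ᵥ S *ᵥ Vᵀ i := by
    rw [Matrix.mul_assoc]
    rfl
  have hmap : P.map (fun ω => (Vᵀ * (of fun i => x i ω)ᵀ).trace) =
      gaussianReal 0 (Vᵀ * S * V).trace.toNNReal := by
    rw [hvar, ← hx Vᵀ]
    rfl
  exact ⟨aemeasurable_of_map_neZero (by rw [hmap]; infer_instance), hmap⟩

theorem wishart_pseudoinverse_trace_bound_general (n d : ℕ) (hd : n + 1 < d)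
    {Ω : Type*} [MeasurableSpace Ω] (μ : Measure Ω)
    (Sig : Matrix (Fin d) (Fin d) ℝ) (hSig : Sig.PosDef) (Xi : Fin n → Ω → (Fin d → ℝ))
    (hgauss : ∀ v : Fin n → (Fin d → ℝ),
      μ.map (fun ω => ∑ i, v i ⬝ᵥ Xi i ω) =
        gaussianReal 0 (Real.toNNReal (∑ i, v i ⬝ᵥ Sig.mulVec (v i))))
    (W : Ω → Matrix (Fin d) (Fin d) ℝ)
    (hW : ∀ ω, W ω = ∑ i, vecMulVec (Xi i ω) (Xi i ω))
    (Wdag : Ω → Matrix (Fin d) (Fin d) ℝ)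
    (hWdag : ∀ ω, IsMoorePenrose (W ω) (Wdag ω)) :
    Integrable (fun ω => (Wdag ω).trace) μ ∧
      (∫ ω, (Wdag ω).trace ∂μ) ≤
        (n : ℝ) / ((d : ℝ) * ((d : ℝ) - (n : ℝ) - 1)) * (Sig⁻¹).trace := by
  have hX := hasIIDGaussianColumns_of_map_sum_dotProduct hgauss
  have hgram (ω : Ω) : W ω = (of fun i => Xi i ω)ᵀ * (of fun i => Xi i ω)ᵀᵀ := by
    ext a b
    simp [hW ω, Matrix.sum_apply, vecMulVec_apply, mul_apply]
  simpa only [Fintype.card_fin] using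
    hX.integrable_and_integral_trace_le_of_isMoorePenrose hSig (by simpa using hd)
      fun ω => hgram ω ▸ hWdag ω

/-- **Expected trace of the pseudoinverse of a singular Wishart matrix.** Let
`W = Σᵢ XᵢXᵢᵀ` where `X₁,…,Xₙ` are i.i.d. `N(0,Σ)` in `ℝᵈ` (characterized by: every joint
linear marginal `Σᵢ vᵢᵀXᵢ` is a centered Gaussian of variance `Σᵢ vᵢᵀΣvᵢ`), with `Σ ≻ 0`
and `d > n + 1`. Then `E[Tr(W†)] ≤ (n/(d(d-n-1))) Tr(Σ⁻¹)`. -/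
theorem wishart_pseudoinverse_trace_bound (n d : ℕ) (hd : n + 1 < d)
    {Ω : Type*} [MeasurableSpace Ω] (μ : Measure Ω) [IsProbabilityMeasure μ]
    (Sig : Matrix (Fin d) (Fin d) ℝ) (hSig : Sig.PosDef)
    (Xi : Fin n → Ω → (Fin d → ℝ)) (hXmeas : ∀ i, Measurable (Xi i))
    (hgauss : ∀ v : Fin n → (Fin d → ℝ),
      μ.map (fun ω => ∑ i, v i ⬝ᵥ Xi i ω) =
        gaussianReal 0 (Real.toNNReal (∑ i, v i ⬝ᵥ Sig.mulVec (v i))))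
    (W : Ω → Matrix (Fin d) (Fin d) ℝ)
    (hW : ∀ ω, W ω = ∑ i, vecMulVec (Xi i ω) (Xi i ω))
    (Wdag : Ω → Matrix (Fin d) (Fin d) ℝ)
    (hWdag : ∀ ω, IsMoorePenrose (W ω) (Wdag ω))
    (hint : Integrable (fun ω => (Wdag ω).trace) μ) :
    (∫ ω, (Wdag ω).trace ∂μ) ≤
      (n : ℝ) / ((d : ℝ) * ((d : ℝ) - (n : ℝ) - 1)) * (Sig⁻¹).trace :=
  (wishart_pseudoinverse_trace_bound_general n d hd μ Sig hSig Xi hgauss W hW Wdag hWdag).2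
end

section
/- Let X_1,…,X_n be i.i.d. N(0, Σ) in ℝ^d with Σ positive definite and n < d - 1, and let G ∈ ℝ^{n×n} be the Gram matrix G_{ij} = X_iᵀX_j. Then G is almost surely invertible, E[G⁻¹] = (E[Tr(G⁻¹)]/n) · I_n, and E[Tr(G⁻¹)] ≤ (n / (d(d - n - 1))) · Tr(Σ⁻¹). -/
open Matrix MeasureTheory ProbabilityTheory BigOperators

/-!
For linearly independent `x`, the diagonal entry `(G⁻¹)ᵢᵢ` of the inverse Gram matrix is `‖wᵢ‖²`,
where `wᵢ` is the vector of least norm with `⟪wᵢ, xⱼ⟫ = δᵢⱼ`.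

If `X = Σ^{1/2} Z` with `Z` standard, then applying `Σ^{-1/2}` to the least-norm vector of `Z`
gives a competitor for that of `X`. The least-norm vector of `Z` has a rotation invariant law, so
`E[(G⁻¹)ᵢᵢ]` is at most `Tr(Σ⁻¹) / d` times its value for `Z`. That value is controlled by
projecting `Zᵢ` onto the orthogonal complement of the other vectors: the projection is a standard
Gaussian in dimension `k ≥ d - n + 1`, and its inverse squared norm has mean `1 / (k - 2)`.

The law of `X` is invariant under changing the sign of one `Xᵢ` and under permuting the `Xᵢ`, so
`E[G⁻¹]` has vanishing off-diagonal entries and equal diagonal entries.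
-/

section GaussianNorm

open Module
open scoped RealInnerProductSpace ENNReal

lemma integral_exp_neg_mul_sq_gaussianReal {u : ℝ} (hu : 0 < u) :
    ∫ x, Real.exp (-((u - 1) / 2 * x ^ 2)) ∂gaussianReal 0 1 = u ^ (-1 / 2 : ℝ) := by
  have hdensity (x : ℝ) : gaussianPDFReal 0 1 x • Real.exp (-((u - 1) / 2 * x ^ 2)) =
      (√(2 * Real.pi))⁻¹ * Real.exp (-(u / 2) * x ^ 2) := by
    rw [gaussianPDFReal, smul_eq_mul, mul_assoc, ← Real.exp_add, NNReal.coe_one, mul_one]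
    congr 2
    ring
  calc ∫ x, Real.exp (-((u - 1) / 2 * x ^ 2)) ∂gaussianReal 0 1
      = (√(2 * Real.pi))⁻¹ * √(Real.pi / (u / 2)) := by
        rw [integral_gaussianReal_eq_integral_smul one_ne_zero]
        simp_rw [hdensity]
        rw [integral_const_mul, integral_gaussian]
    _ = √(u⁻¹) := by
        rw [← Real.sqrt_inv, ← Real.sqrt_mul (by positivity)]
        congr 1
        field_simp
    _ = u ^ (-1 / 2 : ℝ) := by
        rw [Real.sqrt_eq_rpow, Real.inv_rpow hu.le, ← Real.rpow_neg hu.le, neg_div]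

variable {E : Type*} [NormedAddCommGroup E] [InnerProductSpace ℝ E] [FiniteDimensional ℝ E]
  [MeasurableSpace E] [BorelSpace E]

lemma integral_exp_neg_mul_norm_sq_stdGaussian {u : ℝ} (hu : 0 < u) :
    ∫ x, Real.exp (-((u - 1) / 2 * ‖x‖ ^ 2)) ∂stdGaussian E = u ^ (-(finrank ℝ E / 2 : ℝ)) := by
  have hnorm (x : Fin (finrank ℝ E) → ℝ) :
      ‖∑ i, x i • stdOrthonormalBasis ℝ E i‖ ^ 2 = ∑ i, x i ^ 2 := by
    rw [← real_inner_self_eq_norm_sq, (stdOrthonormalBasis ℝ E).orthonormal.inner_sum]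
    simp [sq]
  rw [stdGaussian, integral_map (Measurable.aemeasurable (by fun_prop)) (by fun_prop)]
  simp_rw [hnorm, Finset.mul_sum, ← Finset.sum_neg_distrib, Real.exp_sum]
  rw [integral_fintype_prod_eq_prod (fun _ t ↦ Real.exp (-((u - 1) / 2 * t ^ 2)))]
  simp_rw [integral_exp_neg_mul_sq_gaussianReal hu]
  rw [Finset.prod_const, Finset.card_univ, Fintype.card_fin, ← Real.rpow_mul_natCast hu.le]
  ring_nf

lemma lintegral_Ioi_exp_neg_mul {s : ℝ} (hs : 0 ≤ s) :
    ∫⁻ u in Set.Ioi (1 : ℝ), .ofReal (Real.exp (-((u - 1) / 2 * s))) =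
      2 * (ENNReal.ofReal s)⁻¹ := by
  obtain rfl | hs := hs.eq_or_lt
  · simp
  have hexp (u : ℝ) :
      Real.exp (-((u - 1) / 2 * s)) = Real.exp (s / 2) * Real.exp (-(s / 2) * u) := by
    rw [← Real.exp_add]
    ring_nf
  have hint : IntegrableOn (fun u ↦ Real.exp (-((u - 1) / 2 * s))) (Set.Ioi 1) := by
    simp_rw [hexp]
    exact (integrableOn_exp_mul_Ioi (by linarith) 1).const_mul _
  rw [← ofReal_integral_eq_lintegral_ofReal hint (.of_forall fun _ ↦ (Real.exp_pos _).le)]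
  simp_rw [hexp]
  rw [integral_const_mul, integral_exp_mul_Ioi (by linarith), ← ENNReal.ofReal_inv_of_pos hs,
    ← ENNReal.ofReal_ofNat, ← ENNReal.ofReal_mul (by norm_num)]
  congr 1
  rw [mul_div_assoc', mul_neg, ← Real.exp_add]
  simp [field]

/-- Integrate the Laplace transform of `‖x‖ ^ 2 / 2`. -/
lemma lintegral_inv_enorm_sq_stdGaussian (hE : 2 < finrank ℝ E) :
    ∫⁻ x, (‖x‖ₑ ^ 2)⁻¹ ∂stdGaussian E = .ofReal (1 / (finrank ℝ E - 2)) := by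
  have hE' : (2 : ℝ) < finrank ℝ E := by exact_mod_cast hE
  have hlaplace {u : ℝ} (hu : u ∈ Set.Ioi (1 : ℝ)) :
      ∫⁻ x, .ofReal (Real.exp (-((u - 1) / 2 * ‖x‖ ^ 2))) ∂stdGaussian E =
        .ofReal (u ^ (-(finrank ℝ E / 2 : ℝ))) := by
    have hu : 0 < u := zero_lt_one.trans hu
    have h := integral_exp_neg_mul_norm_sq_stdGaussian (E := E) hu
    rw [← h, ofReal_integral_eq_lintegral_ofReal _ (.of_forall fun _ ↦ (Real.exp_pos _).le)]
    exact .of_integral_ne_zero (h ▸ (Real.rpow_pos_of_pos hu _).ne')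
  have htwo : 2 * ∫⁻ x, (‖x‖ₑ ^ 2)⁻¹ ∂stdGaussian E = 2 * .ofReal (1 / (finrank ℝ E - 2)) := calc
    2 * ∫⁻ x, (‖x‖ₑ ^ 2)⁻¹ ∂stdGaussian E
      = ∫⁻ x, (∫⁻ u in Set.Ioi (1 : ℝ), .ofReal (Real.exp (-((u - 1) / 2 * ‖x‖ ^ 2))))
          ∂stdGaussian E := by
        simp_rw [lintegral_Ioi_exp_neg_mul (sq_nonneg _), ENNReal.ofReal_pow (norm_nonneg _),
          ofReal_norm]
        rw [lintegral_const_mul _ (by fun_prop)]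
    _ = ∫⁻ u in Set.Ioi (1 : ℝ), (∫⁻ x, .ofReal (Real.exp (-((u - 1) / 2 * ‖x‖ ^ 2)))
          ∂stdGaussian E) :=
        lintegral_lintegral_swap (by fun_prop)
    _ = ∫⁻ u in Set.Ioi (1 : ℝ), .ofReal (u ^ (-(finrank ℝ E / 2 : ℝ))) :=
        setLIntegral_congr_fun measurableSet_Ioi fun _ ↦ hlaplace
    _ = .ofReal (∫ u in Set.Ioi (1 : ℝ), u ^ (-(finrank ℝ E / 2 : ℝ))) := by
        refine (ofReal_integral_eq_lintegral_ofReal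
          (integrableOn_Ioi_rpow_of_lt (by linarith) one_pos) ?_).symm
        filter_upwards [ae_restrict_mem measurableSet_Ioi] with u (hu : 1 < u)
        positivity
    _ = 2 * .ofReal (1 / (finrank ℝ E - 2)) := by
        rw [integral_Ioi_rpow_of_lt (by linarith) one_pos, Real.one_rpow,
          ← ENNReal.ofReal_ofNat, ← ENNReal.ofReal_mul (by norm_num)]
        congr 1
        rw [neg_div, ← div_neg, mul_one_div, div_eq_div_iff (by linarith) (by linarith)]
        ring
  exact (ENNReal.mul_right_inj two_ne_zero ENNReal.ofNat_ne_top).1 htwo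

lemma stdGaussian_map_orthogonalProjectionOnto (V : Submodule ℝ E) :
    (stdGaussian E).map V.orthogonalProjectionOnto = stdGaussian V := by
  have := Measure.isProbabilityMeasure_map (μ := stdGaussian E)
    V.orthogonalProjectionOnto.continuous.measurable.aemeasurable
  refine Measure.ext_of_charFun (funext fun t ↦ ?_)
  have hinner (x : E) : ⟪V.orthogonalProjectionOnto x, t⟫ = ⟪x, (t : E)⟫ :=
    Submodule.inner_orthogonalProjectionOnto_eq_of_mem_right t x
  rw [charFun_stdGaussian, charFun_apply, integral_map (by fun_prop) (by fun_prop)]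
  simp_rw [hinner]
  rw [← charFun_apply, charFun_stdGaussian, Submodule.coe_norm]

lemma stdGaussian_submodule_eq_zero {V : Submodule ℝ E} (hV : V ≠ ⊤) :
    stdGaussian E (V : Set E) = 0 := by
  obtain ⟨t, ht, ht0⟩ := Vᗮ.exists_mem_ne_zero_of_ne_bot (by simpa using hV)
  have hvar : Var[innerSL ℝ t; stdGaussian E].toNNReal ≠ 0 := by
    rw [variance_dual_stdGaussian, innerSL_apply_norm]
    simpa using ht0
  have hatoms := nullSingletonClass_gaussianReal (μ := (stdGaussian E)[innerSL ℝ t]) hvar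
  rw [← IsGaussian.map_eq_gaussianReal (innerSL ℝ t)] at hatoms
  refine measure_mono_null (t := innerSL ℝ t ⁻¹' {0})
    (fun x hx ↦ V.inner_left_of_mem_orthogonal hx ht) ?_
  rw [← Measure.map_apply (by fun_prop) (measurableSet_singleton 0), measure_singleton]

end GaussianNorm

section DualVector

open scoped RealInnerProductSpace ENNReal

variable {ι : Type*} [Fintype ι] [DecidableEq ι]
  {E F : Type*} [NormedAddCommGroup E] [InnerProductSpace ℝ E]
  [NormedAddCommGroup F] [InnerProductSpace ℝ F]

/-- The dual basis of a linearly independent family `x` inside its span, used to realize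
`(gram ℝ x)⁻¹ i i` as a squared norm. As `Matrix.inv` sends singular matrices to zero,
`gramDual x = 0` when `x` is linearly dependent. -/
noncomputable def gramDual (x : ι → E) (i : ι) : E :=
  ∑ j, (gram ℝ x)⁻¹ i j • x j

lemma isUnit_det_gram_iff_linearIndependent {x : ι → E} :
    IsUnit (gram ℝ x).det ↔ LinearIndependent ℝ x := by
  rw [isUnit_iff_ne_zero, det_gram_ne_zero_iff_linearIndependent]

lemma gram_inv_eq_zero {x : ι → E} (hx : ¬LinearIndependent ℝ x) : (gram ℝ x)⁻¹ = 0 :=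
  nonsing_inv_apply_not_isUnit _ (mt isUnit_det_gram_iff_linearIndependent.1 hx)

lemma inner_gramDual_right (x : ι → E) (u : E) (i : ι) :
    ⟪u, gramDual x i⟫ = ∑ j, (gram ℝ x)⁻¹ i j * ⟪u, x j⟫ := by
  simp [gramDual, inner_sum, inner_smul_right]

lemma inner_gramDual_left {x : ι → E} (hx : LinearIndependent ℝ x) (i j : ι) :
    ⟪gramDual x i, x j⟫ = if j = i then 1 else 0 := by
  have h := congr_fun₂ (nonsing_inv_mul _ (isUnit_det_gram_iff_linearIndependent.2 hx)) i j
  rw [Matrix.mul_apply, one_apply] at h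
  simpa [gramDual, sum_inner, inner_smul_left, eq_comm] using h

lemma norm_gramDual_sq (x : ι → E) (i : ι) : ‖gramDual x i‖ ^ 2 = (gram ℝ x)⁻¹ i i := by
  by_cases hx : LinearIndependent ℝ x
  · rw [← real_inner_self_eq_norm_sq, inner_gramDual_right]
    simp [inner_gramDual_left hx]
  · simp [gramDual, gram_inv_eq_zero hx]

lemma gramDual_comp_linearIsometryEquiv (U : E ≃ₗᵢ[ℝ] F) (x : ι → E) (i : ι) :
    gramDual (fun j ↦ U (x j)) i = U (gramDual x i) := by
  have hgram : gram ℝ (fun j ↦ U (x j)) = gram ℝ x := by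
    ext j k
    simp
  simp [gramDual, hgram]

lemma norm_gramDual_le {x : ι → E} {i : ι} {u : E} (hu : ∀ j, ⟪u, x j⟫ = if j = i then 1 else 0) :
    ‖gramDual x i‖ ≤ ‖u‖ := by
  have hinner : ⟪u, gramDual x i⟫ = ‖gramDual x i‖ ^ 2 := by
    simp [norm_gramDual_sq, inner_gramDual_right, hu]
  have hsub := norm_sub_sq_real u (gramDual x i)
  exact abs_le_of_sq_le_sq' (by nlinarith [sq_nonneg ‖u - gramDual x i‖]) (norm_nonneg u) |>.2

/-- The vector `P xᵢ / ‖P xᵢ‖²`, with `P` the projection onto `V`, is dual to `xᵢ`. -/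
lemma enorm_gramDual_le_inv_enorm_orthogonalProjectionOnto {x : ι → E} {i : ι}
    {V : Submodule ℝ E} [V.HasOrthogonalProjection] (hV : ∀ j ≠ i, x j ∈ Vᗮ) :
    ‖gramDual x i‖ₑ ≤ ‖V.orthogonalProjectionOnto (x i)‖ₑ⁻¹ := by
  set p := V.orthogonalProjectionOnto (x i)
  obtain hp | hp := eq_or_ne p 0
  · simp [hp]
  have hp : ‖p‖ ≠ 0 := norm_ne_zero_iff.2 hp
  have hdual (j : ι) : ⟪(‖p‖ ^ 2)⁻¹ • (p : E), x j⟫ = if j = i then 1 else 0 := by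
    rw [inner_smul_left]
    split_ifs with hj
    · rw [hj, ← Submodule.inner_orthogonalProjectionOnto_eq_of_mem_left, real_inner_self_eq_norm_sq]
      exact inv_mul_cancel₀ (pow_ne_zero 2 hp)
    · rw [V.inner_right_of_mem_orthogonal p.2 (hV j hj), mul_zero]
  have hnorm : ‖(‖p‖ ^ 2)⁻¹ • (p : E)‖ = ‖p‖⁻¹ := by
    rw [norm_smul, norm_inv, norm_pow, norm_norm, Submodule.coe_norm]
    field_simp
  calc ‖gramDual x i‖ₑ ≤ ‖‖p‖⁻¹‖ₑ :=
        enorm_le_iff_norm_le.2 ((norm_gramDual_le hdual).trans (by rw [hnorm, norm_inv, norm_norm]))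
    _ = ‖p‖ₑ⁻¹ := by rw [enorm_inv hp, enorm_norm]

/-- Applying `B` to the dual vectors of `z` yields dual vectors of `A z`. -/
lemma norm_gramDual_comp_le {A B : E → F} (hAB : ∀ u v, ⟪B u, A v⟫ = ⟪u, v⟫) {z : ι → E}
    (hz : LinearIndependent ℝ z) (i : ι) :
    ‖gramDual (fun j ↦ A (z j)) i‖ ≤ ‖B (gramDual z i)‖ :=
  norm_gramDual_le fun j ↦ by rw [hAB, inner_gramDual_left hz]

variable [MeasurableSpace E] [BorelSpace E] [SecondCountableTopology E]

lemma measurable_gram_inv_apply (i j : ι) : Measurable fun x : ι → E ↦ (gram ℝ x)⁻¹ i j := by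
  have hgram : Continuous (gram ℝ : (ι → E) → Matrix ι ι ℝ) :=
    continuous_matrix fun k l ↦ by simp only [gram_apply]; fun_prop
  simp_rw [inv_def, Ring.inverse_eq_inv']
  exact hgram.matrix_det.measurable.inv.mul (hgram.matrix_adjugate.matrix_elem i j).measurable

lemma measurable_gramDual (i : ι) : Measurable fun x : ι → E ↦ gramDual x i :=
  Finset.measurable_sum _ fun j _ ↦ (measurable_gram_inv_apply i j).smul (measurable_pi_apply j)

end DualVector

section Pi

open scoped ENNReal

variable {ι : Type*} [Fintype ι] [DecidableEq ι] {α : ι → Type*} [∀ i, MeasurableSpace (α i)]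
  {γ : ∀ i, Measure (α i)}

lemma lintegral_pi_le_of_forall_update [∀ i, IsProbabilityMeasure (γ i)]
    {f : (∀ i, α i) → ℝ≥0∞} (hf : Measurable f) (i : ι) {C : ℝ≥0∞}
    (hC : ∀ x, ∫⁻ t, f (Function.update x i t) ∂γ i ≤ C) : ∫⁻ x, f x ∂Measure.pi γ ≤ C := by
  calc ∫⁻ x, f x ∂Measure.pi γ ≤ ∫⁻ _, C ∂Measure.pi γ := by
        refine lintegral_le_of_lmarginal_le (s := {i}) hf measurable_const fun x ↦ ?_
        simpa [lmarginal_singleton] using hC x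
    _ = C := by simp

lemma ae_pi_of_forall_update [∀ i, SigmaFinite (γ i)] {p : (∀ i, α i) → Prop}
    (hp : MeasurableSet {x | p x}) (i : ι) (h : ∀ x, ∀ᵐ t ∂γ i, p (Function.update x i t)) :
    ∀ᵐ x ∂Measure.pi γ, p x := by
  change Measure.pi γ {x | p x}ᶜ = 0
  rw [← lintegral_indicator_one hp.compl]
  refine (lintegral_eq_of_lmarginal_eq {i} (measurable_one.indicator hp.compl)
    measurable_zero ?_).trans lintegral_zero
  ext x
  rw [lmarginal_singleton, lmarginal_singleton]
  refine lintegral_congr_ae ((h x).mono fun t ht ↦ ?_)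
  simpa using ht

end Pi

section StandardGaussianFamily

open Module Submodule
open scoped RealInnerProductSpace ENNReal

lemma finrank_span_image_finset_le_card {ι R M : Type*} [Ring R] [StrongRankCondition R]
    [AddCommGroup M] [Module R M] (x : ι → M) (s : Finset ι) :
    finrank R (span R (x '' s)) ≤ s.card := by
  rw [Set.image_eq_range]
  exact (finrank_range_le_card _).trans_eq (Fintype.card_coe s)

variable {ι : Type*} [Fintype ι]
  {E : Type*} [NormedAddCommGroup E] [InnerProductSpace ℝ E] [FiniteDimensional ℝ E]
  [MeasurableSpace E] [BorelSpace E]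

lemma ae_linearIndependent_pi {γ : ι → Measure E} [∀ i, SigmaFinite (γ i)]
    (hγ : ∀ (i) (V : Submodule ℝ E), V ≠ ⊤ → γ i V = 0) (hι : Fintype.card ι ≤ finrank ℝ E) :
    ∀ᵐ x ∂Measure.pi γ, LinearIndependent ℝ x := by
  classical
  have hmeas (s : Finset ι) : MeasurableSet {x : ι → E | LinearIndepOn ℝ x (s : Set ι)} :=
    isOpen_setOfPred_linearIndependent.measurableSet.preimage (Set.measurable_restrict _)
  have hspan (i : ι) (s : Finset ι) (his : i ∉ s) (x : ι → E) : span ℝ (x '' s) ≠ ⊤ := by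
    intro h
    have hcard : finrank ℝ E ≤ s.card := by
      rw [← finrank_top ℝ E, ← h]
      exact finrank_span_image_finset_le_card x s
    exact absurd (Finset.card_lt_univ_of_notMem his) (by omega)
  have hall (s : Finset ι) : ∀ᵐ x ∂Measure.pi γ, LinearIndepOn ℝ x (s : Set ι) := by
    induction s using Finset.induction_on with
    | empty => simp
    | insert i s his ih =>
      have hstep : ∀ᵐ x ∂Measure.pi γ,
          LinearIndepOn ℝ x (s : Set ι) → LinearIndepOn ℝ x (insert i s : Finset ι) := by
        refine ae_pi_of_forall_update ((hmeas s).imp (hmeas _)) i fun x ↦ ?_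
        filter_upwards [measure_eq_zero_iff_ae_notMem.1 (hγ i _ (hspan i s his x))] with t ht hs
        have himage : Function.update x i t '' s = x '' s :=
          Set.image_congr fun j hj ↦ Function.update_of_ne (ne_of_mem_of_not_mem hj his) _ _
        rw [Finset.coe_insert, linearIndepOn_insert (by simpa using his), himage]
        exact ⟨hs, by simpa using ht⟩
      filter_upwards [ih, hstep] with x hx hx' using hx' hx
  simpa [linearIndepOn_univ_iff] using hall Finset.univ

variable [DecidableEq ι]

lemma lintegral_enorm_gramDual_sq_le (hι : Fintype.card ι + 1 < finrank ℝ E) (i : ι) :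
    ∫⁻ x, ‖gramDual x i‖ₑ ^ 2 ∂Measure.pi (fun _ : ι ↦ stdGaussian E) ≤
      .ofReal (1 / (finrank ℝ E - Fintype.card ι - 1)) := by
  refine lintegral_pi_le_of_forall_update ((measurable_gramDual i).enorm.pow_const 2) i fun x ↦ ?_
  set S := span ℝ (x '' ({i}ᶜ : Finset ι))
  have hS : finrank ℝ S ≤ Fintype.card ι - 1 := by
    rw [← Finset.card_singleton i, ← Finset.card_compl]
    exact finrank_span_image_finset_le_card x _
  have hadd : finrank ℝ S + finrank ℝ Sᗮ = finrank ℝ E := S.finrank_add_finrank_orthogonal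
  have hcard : 0 < Fintype.card ι := Fintype.card_pos_iff.2 ⟨i⟩
  have hle (t : E) :
      ‖gramDual (Function.update x i t) i‖ₑ ^ 2 ≤ (‖Sᗮ.orthogonalProjectionOnto t‖ₑ ^ 2)⁻¹ := by
    have hmem (j : ι) (hj : j ≠ i) : Function.update x i t j ∈ Sᗮᗮ := by
      rw [Function.update_of_ne hj]
      exact S.le_orthogonal_orthogonal (subset_span ⟨j, by simpa using hj, rfl⟩)
    simpa [ENNReal.inv_pow] using
      pow_le_pow_left' (enorm_gramDual_le_inv_enorm_orthogonalProjectionOnto hmem) 2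
  calc ∫⁻ t, ‖gramDual (Function.update x i t) i‖ₑ ^ 2 ∂stdGaussian E
      ≤ ∫⁻ t, (‖Sᗮ.orthogonalProjectionOnto t‖ₑ ^ 2)⁻¹ ∂stdGaussian E := lintegral_mono hle
    _ = ∫⁻ y, (‖y‖ₑ ^ 2)⁻¹ ∂stdGaussian Sᗮ := by
      rw [← stdGaussian_map_orthogonalProjectionOnto, lintegral_map (by fun_prop) (by fun_prop)]
    _ = .ofReal (1 / (finrank ℝ Sᗮ - 2)) := lintegral_inv_enorm_sq_stdGaussian (by omega)
    _ ≤ .ofReal (1 / (finrank ℝ E - Fintype.card ι - 1)) := by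
      have hpos : (Fintype.card ι + 1 : ℝ) < finrank ℝ E := mod_cast hι
      have hle : (finrank ℝ E + 1 : ℝ) ≤ finrank ℝ Sᗮ + Fintype.card ι := by
        exact_mod_cast (by omega : finrank ℝ E + 1 ≤ finrank ℝ Sᗮ + Fintype.card ι)
      exact ENNReal.ofReal_le_ofReal (one_div_le_one_div_of_le (by linarith) (by linarith))

end StandardGaussianFamily

section RotationInvariance

open Module
open scoped RealInnerProductSpace ENNReal

lemma sum_enorm_inner_sq {κ E : Type*} [Fintype κ] [NormedAddCommGroup E] [InnerProductSpace ℝ E]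
    (b : OrthonormalBasis κ ℝ E) (x : E) : ∑ k, ‖⟪b k, x⟫‖ₑ ^ 2 = ‖x‖ₑ ^ 2 := by
  simp_rw [← ofReal_norm, ← ENNReal.ofReal_pow (norm_nonneg _)]
  rw [← ENNReal.ofReal_sum_of_nonneg fun _ _ ↦ sq_nonneg _, b.sum_sq_norm_inner_right]

variable {E F : Type*} [NormedAddCommGroup E] [InnerProductSpace ℝ E] [FiniteDimensional ℝ E]
  [MeasurableSpace E] [BorelSpace E] [NormedAddCommGroup F] [InnerProductSpace ℝ F]
  [FiniteDimensional ℝ F] {ν : Measure E}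

lemma lintegral_enorm_inner_sq_eq_of_norm_eq (hν : ∀ U : E ≃ₗᵢ[ℝ] E, ν.map U = ν) {s t : E}
    (hst : ‖s‖ = ‖t‖) : ∫⁻ x, ‖⟪s, x⟫‖ₑ ^ 2 ∂ν = ∫⁻ x, ‖⟪t, x⟫‖ₑ ^ 2 ∂ν := by
  set U := (ℝ ∙ (s - t))ᗮ.reflection
  calc ∫⁻ x, ‖⟪s, x⟫‖ₑ ^ 2 ∂ν = ∫⁻ x, ‖⟪U s, U x⟫‖ₑ ^ 2 ∂ν := by simp
    _ = ∫⁻ x, ‖⟪t, x⟫‖ₑ ^ 2 ∂(ν.map U) := by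
      rw [Submodule.reflection_sub hst, lintegral_map (by fun_prop) (by fun_prop)]
    _ = ∫⁻ x, ‖⟪t, x⟫‖ₑ ^ 2 ∂ν := by rw [hν]

/-- By invariance `∫ ⟪t, x⟫ ^ 2 = c * ‖t‖ ^ 2`; summing over an orthonormal basis gives `c`. -/
lemma finrank_mul_lintegral_enorm_inner_sq (hν : ∀ U : E ≃ₗᵢ[ℝ] E, ν.map U = ν) (t : E) :
    finrank ℝ E * ∫⁻ x, ‖⟪t, x⟫‖ₑ ^ 2 ∂ν = ‖t‖ₑ ^ 2 * ∫⁻ x, ‖x‖ₑ ^ 2 ∂ν := by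
  set b := stdOrthonormalBasis ℝ E
  have hbasis (k : Fin (finrank ℝ E)) :
      ‖t‖ₑ ^ 2 * ∫⁻ x, ‖⟪b k, x⟫‖ₑ ^ 2 ∂ν = ∫⁻ x, ‖⟪t, x⟫‖ₑ ^ 2 ∂ν := by
    rw [← lintegral_const_mul _ (by fun_prop),
      lintegral_enorm_inner_sq_eq_of_norm_eq hν (s := t) (t := ‖t‖ • b k) (by simp [norm_smul])]
    simp [inner_smul_left, enorm_mul, mul_pow]
  calc finrank ℝ E * ∫⁻ x, ‖⟪t, x⟫‖ₑ ^ 2 ∂ν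
      = ∑ k, ‖t‖ₑ ^ 2 * ∫⁻ x, ‖⟪b k, x⟫‖ₑ ^ 2 ∂ν := by simp [hbasis]
    _ = ‖t‖ₑ ^ 2 * ∫⁻ x, ‖x‖ₑ ^ 2 ∂ν := by
      rw [← Finset.mul_sum, ← lintegral_finsetSum _ fun _ _ ↦ by fun_prop]
      simp_rw [sum_enorm_inner_sq b]

lemma finrank_mul_lintegral_enorm_apply_sq (hν : ∀ U : E ≃ₗᵢ[ℝ] E, ν.map U = ν) {κ : Type*}
    [Fintype κ] (b : OrthonormalBasis κ ℝ F) (B : E →ₗ[ℝ] F) :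
    finrank ℝ E * ∫⁻ x, ‖B x‖ₑ ^ 2 ∂ν =
      (∑ k, ‖B.adjoint (b k)‖ₑ ^ 2) * ∫⁻ x, ‖x‖ₑ ^ 2 ∂ν := by
  simp_rw [← sum_enorm_inner_sq b, ← LinearMap.adjoint_inner_left B]
  rw [lintegral_finsetSum _ fun _ _ ↦ by fun_prop, Finset.mul_sum, Finset.sum_mul]
  simp_rw [finrank_mul_lintegral_enorm_inner_sq hν]

variable {ι : Type*} [Fintype ι] [DecidableEq ι]

lemma map_gramDual_pi_stdGaussian_map (U : E ≃ₗᵢ[ℝ] E) (i : ι) :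
    ((Measure.pi fun _ : ι ↦ stdGaussian E).map (gramDual · i)).map U =
      (Measure.pi fun _ : ι ↦ stdGaussian E).map (gramDual · i) := by
  have hpi := measurePreserving_pi (fun _ : ι ↦ stdGaussian E) _
    fun _ ↦ ⟨U.continuous.measurable, stdGaussian_map U⟩
  have hcomm : U ∘ (gramDual · i) = (gramDual · i) ∘ fun (x : ι → E) j ↦ U (x j) :=
    funext fun x ↦ (gramDual_comp_linearIsometryEquiv U x i).symm
  have hmeas := measurable_gramDual (E := E) i
  rw [Measure.map_map U.continuous.measurable hmeas, hcomm,
    ← Measure.map_map hmeas hpi.measurable, hpi.map_eq]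

lemma lintegral_enorm_apply_gramDual_sq_le (hι : Fintype.card ι + 1 < finrank ℝ E) (i : ι)
    {κ : Type*} [Fintype κ] (b : OrthonormalBasis κ ℝ F) (B : E →ₗ[ℝ] F) :
    ∫⁻ x, ‖B (gramDual x i)‖ₑ ^ 2 ∂Measure.pi (fun _ : ι ↦ stdGaussian E) ≤
      .ofReal ((∑ k, ‖B.adjoint (b k)‖ ^ 2) /
        (finrank ℝ E * (finrank ℝ E - Fintype.card ι - 1))) := by
  have hd : (finrank ℝ E : ℝ≥0∞) ≠ 0 := by
    simp only [ne_eq, Nat.cast_eq_zero]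
    omega
  have hden : (0 : ℝ) < finrank ℝ E - Fintype.card ι - 1 := by
    have : (Fintype.card ι + 1 : ℝ) < finrank ℝ E := mod_cast hι
    linarith
  have hB : Measurable fun w ↦ ‖B w‖ₑ ^ 2 :=
    B.continuous_of_finiteDimensional.enorm.measurable.pow_const 2
  have hw := measurable_gramDual (E := E) i
  refine (ENNReal.mul_le_mul_iff_right hd (ENNReal.natCast_ne_top _)).1 ?_
  calc finrank ℝ E * ∫⁻ x, ‖B (gramDual x i)‖ₑ ^ 2 ∂Measure.pi (fun _ : ι ↦ stdGaussian E)
      = (∑ k, ‖B.adjoint (b k)‖ₑ ^ 2) *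
          ∫⁻ x, ‖gramDual x i‖ₑ ^ 2 ∂Measure.pi (fun _ : ι ↦ stdGaussian E) := by
        have h := finrank_mul_lintegral_enorm_apply_sq
          (fun U ↦ map_gramDual_pi_stdGaussian_map U i) b B
        rwa [lintegral_map hB hw, lintegral_map (by fun_prop) hw] at h
    _ ≤ (∑ k, ‖B.adjoint (b k)‖ₑ ^ 2) * .ofReal (1 / (finrank ℝ E - Fintype.card ι - 1)) := by
        gcongr
        exact lintegral_enorm_gramDual_sq_le hι i
    _ = finrank ℝ E * .ofReal ((∑ k, ‖B.adjoint (b k)‖ ^ 2) /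
          (finrank ℝ E * (finrank ℝ E - Fintype.card ι - 1))) := by
        simp_rw [← ofReal_norm, ← ENNReal.ofReal_pow (norm_nonneg _)]
        rw [← ENNReal.ofReal_sum_of_nonneg fun _ _ ↦ sq_nonneg _, ← ENNReal.ofReal_natCast,
          ← ENNReal.ofReal_mul (by positivity), ← ENNReal.ofReal_mul (by positivity)]
        have : (finrank ℝ E : ℝ) ≠ 0 := mod_cast hd
        congr 1
        field_simp

end RotationInvariance

section MultivariateGaussianFamily

open Module
open scoped RealInnerProductSpace ENNReal MatrixOrder

variable {κ : Type*} [Fintype κ] [DecidableEq κ]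

lemma inner_toEuclideanLin_inv_toEuclideanLin {R : Matrix κ κ ℝ} (hR : R.IsHermitian)
    (hRu : IsUnit R) (u v : EuclideanSpace ℝ κ) :
    ⟪toEuclideanLin R⁻¹ u, toEuclideanLin R v⟫ = ⟪u, v⟫ := by
  rw [← hR.inv.eq, toEuclideanLin_conjTranspose_eq_adjoint, LinearMap.adjoint_inner_left,
    ← LinearMap.comp_apply, ← toLpLin_mul, nonsing_inv_mul _ ((isUnit_iff_isUnit_det _).1 hRu)]
  simp

lemma sum_norm_adjoint_toEuclideanLin_sq (M : Matrix κ κ ℝ) :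
    ∑ k, ‖(toEuclideanLin M).adjoint (EuclideanSpace.basisFun κ ℝ k)‖ ^ 2 = (M * Mᴴ).trace := by
  simp [← toEuclideanLin_conjTranspose_eq_adjoint, toLpLin_apply, EuclideanSpace.norm_sq_eq,
    trace, mul_apply, ← sq]

variable {S : Matrix κ κ ℝ}

lemma isUnit_sqrt_of_posDef (hS : S.PosDef) : IsUnit (CFC.sqrt S) :=
  (CFC.isUnit_sqrt_iff S hS.posSemidef.nonneg).2 hS.isUnit

lemma inv_sqrt_mul_conjTranspose (hS : S.PosDef) :
    (CFC.sqrt S)⁻¹ * (CFC.sqrt S)⁻¹ᴴ = S⁻¹ := by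
  rw [(CFC.sqrt_nonneg S).posSemidef.isHermitian.inv.eq, ← Matrix.mul_inv_rev,
    CFC.sqrt_mul_sqrt_self S hS.posSemidef.nonneg]

variable {ι : Type*} [Fintype ι]

lemma pi_multivariateGaussian_eq_map (S : Matrix κ κ ℝ) :
    Measure.pi (fun _ : ι ↦ multivariateGaussian 0 S) =
      (Measure.pi fun _ : ι ↦ stdGaussian (EuclideanSpace ℝ κ)).map
        fun z j ↦ toEuclideanLin (CFC.sqrt S) (z j) := by
  have hA : multivariateGaussian 0 S =
      (stdGaussian (EuclideanSpace ℝ κ)).map (toEuclideanLin (CFC.sqrt S)) := by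
    simp [multivariateGaussian, ← coe_toEuclideanCLM_eq_toEuclideanLin]
  have hmeas : Measurable (toEuclideanLin (CFC.sqrt S)) :=
    (LinearMap.continuous_of_finiteDimensional _).measurable
  have := Measure.isProbabilityMeasure_map (μ := stdGaussian (EuclideanSpace ℝ κ))
    hmeas.aemeasurable
  rw [hA, Measure.pi_map_pi fun _ ↦ hmeas.aemeasurable]

lemma ae_linearIndependent_pi_multivariateGaussian (hS : S.PosDef)
    (hι : Fintype.card ι ≤ Fintype.card κ) :
    ∀ᵐ x ∂Measure.pi (fun _ : ι ↦ multivariateGaussian 0 S), LinearIndependent ℝ x := by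
  set A := toEuclideanLin (CFC.sqrt S)
  have hA : Measurable fun (z : ι → EuclideanSpace ℝ κ) j ↦ A (z j) := by fun_prop
  have hker : LinearMap.ker A = ⊥ := LinearMap.ker_eq_bot'.2 fun v hv ↦ by
    rw [← inner_self_eq_zero (𝕜 := ℝ), ← inner_toEuclideanLin_inv_toEuclideanLin
      (CFC.sqrt_nonneg S).posSemidef.isHermitian (isUnit_sqrt_of_posDef hS), hv, inner_zero_right]
  rw [pi_multivariateGaussian_eq_map, ae_map_iff hA.aemeasurable
    isOpen_setOfPred_linearIndependent.measurableSet]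
  filter_upwards [ae_linearIndependent_pi (γ := fun _ : ι ↦ stdGaussian (EuclideanSpace ℝ κ))
    (fun _ _ ↦ stdGaussian_submodule_eq_zero) (by simpa using hι)] with z hz
  exact hz.map' _ hker

variable [DecidableEq ι]

lemma lintegral_enorm_gramDual_sq_multivariateGaussian_le (hS : S.PosDef)
    (hι : Fintype.card ι + 1 < Fintype.card κ) (i : ι) :
    ∫⁻ x, ‖gramDual x i‖ₑ ^ 2 ∂Measure.pi (fun _ : ι ↦ multivariateGaussian 0 S) ≤
      .ofReal (S⁻¹.trace / (Fintype.card κ * (Fintype.card κ - Fintype.card ι - 1))) := by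
  set A := toEuclideanLin (CFC.sqrt S)
  set B := toEuclideanLin (CFC.sqrt S)⁻¹
  have hAB (u v) : ⟪B u, A v⟫ = ⟪u, v⟫ :=
    inner_toEuclideanLin_inv_toEuclideanLin (CFC.sqrt_nonneg S).posSemidef.isHermitian
      (isUnit_sqrt_of_posDef hS) u v
  have hA : Measurable fun (z : ι → EuclideanSpace ℝ κ) j ↦ A (z j) := by fun_prop
  have hdim : finrank ℝ (EuclideanSpace ℝ κ) = Fintype.card κ := finrank_euclideanSpace
  have hind := ae_linearIndependent_pi (γ := fun _ : ι ↦ stdGaussian (EuclideanSpace ℝ κ))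
    (fun _ _ ↦ stdGaussian_submodule_eq_zero) (by omega)
  calc ∫⁻ x, ‖gramDual x i‖ₑ ^ 2 ∂Measure.pi (fun _ : ι ↦ multivariateGaussian 0 S)
      = ∫⁻ z, ‖gramDual (fun j ↦ A (z j)) i‖ₑ ^ 2
          ∂Measure.pi (fun _ : ι ↦ stdGaussian (EuclideanSpace ℝ κ)) := by
        rw [pi_multivariateGaussian_eq_map,
          lintegral_map ((measurable_gramDual i).enorm.pow_const 2) hA]
    _ ≤ ∫⁻ z, ‖B (gramDual z i)‖ₑ ^ 2
          ∂Measure.pi (fun _ : ι ↦ stdGaussian (EuclideanSpace ℝ κ)) := by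
        refine lintegral_mono_ae (hind.mono fun z hz ↦ ?_)
        gcongr
        exact enorm_le_iff_norm_le.2 (norm_gramDual_comp_le hAB hz i)
    _ ≤ .ofReal (S⁻¹.trace / (Fintype.card κ * (Fintype.card κ - Fintype.card ι - 1))) := by
        have h := lintegral_enorm_apply_gramDual_sq_le (by omega) i
          (EuclideanSpace.basisFun κ ℝ) B
        rwa [sum_norm_adjoint_toEuclideanLin_sq, inv_sqrt_mul_conjTranspose hS, hdim] at h

lemma integral_gram_inv_apply_self_le (hS : S.PosDef)
    (hι : Fintype.card ι + 1 < Fintype.card κ) (i : ι) :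
    ∫ x, (gram ℝ x)⁻¹ i i ∂Measure.pi (fun _ : ι ↦ multivariateGaussian 0 S) ≤
      S⁻¹.trace / (Fintype.card κ * (Fintype.card κ - Fintype.card ι - 1)) := by
  have hι' : (Fintype.card ι + 1 : ℝ) < Fintype.card κ := mod_cast hι
  simp_rw [← norm_gramDual_sq]
  rw [integral_eq_lintegral_of_nonneg_ae (.of_forall fun _ ↦ sq_nonneg _)
    ((measurable_gramDual i).norm.pow_const 2).aestronglyMeasurable]
  simp_rw [ENNReal.ofReal_pow (norm_nonneg _), ofReal_norm]
  refine ENNReal.toReal_le_of_le_ofReal (div_nonneg hS.inv.posSemidef.trace_nonneg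
    (mul_nonneg (Nat.cast_nonneg _) (by linarith)))
    (lintegral_enorm_gramDual_sq_multivariateGaussian_le hS hι i)

end MultivariateGaussianFamily

section GramInverseSymmetry

open scoped RealInnerProductSpace

variable {ι : Type*} [Fintype ι] [DecidableEq ι]
  {E : Type*} [NormedAddCommGroup E] [InnerProductSpace ℝ E]

lemma gram_inv_update_neg_apply (x : ι → E) {i j : ι} (hij : i ≠ j) :
    (gram ℝ (Function.update x i (-x i)))⁻¹ i j = -(gram ℝ x)⁻¹ i j := by
  set D : Matrix ι ι ℝ := diagonal (Function.update 1 i (-1))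
  have hD : D⁻¹ = D := by
    refine inv_eq_left_inv ?_
    rw [diagonal_mul_diagonal, ← diagonal_one]
    congr
    ext k
    by_cases hk : k = i <;> simp [hk]
  have hgram : gram ℝ (Function.update x i (-x i)) = D * gram ℝ x * D := by
    ext k l
    by_cases hk : k = i <;> by_cases hl : l = i <;> simp [D, hk, hl]
  rw [hgram, Matrix.mul_inv_rev, Matrix.mul_inv_rev, hD]
  simp [D, hij.symm]

lemma gram_inv_comp_equiv_apply (x : ι → E) (e : ι ≃ ι) (i j : ι) :
    (gram ℝ (x ∘ e))⁻¹ i j = (gram ℝ x)⁻¹ (e i) (e j) := by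
  have hgram : gram ℝ (x ∘ e) = (gram ℝ x).submatrix e e := rfl
  rw [hgram, inv_submatrix_equiv, submatrix_apply]

variable [MeasurableSpace E]

lemma integral_gram_inv_apply_self_eq (γ : Measure E) [SigmaFinite γ] (i j : ι) :
    ∫ x, (gram ℝ x)⁻¹ i i ∂Measure.pi (fun _ : ι ↦ γ) =
      ∫ x, (gram ℝ x)⁻¹ j j ∂Measure.pi (fun _ : ι ↦ γ) := by
  have hswap := measurePreserving_piCongrLeft (fun _ : ι ↦ γ) (Equiv.swap i j)
  rw [← hswap.integral_comp']
  congr! 2 with x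
  have hx : MeasurableEquiv.piCongrLeft (fun _ ↦ E) (Equiv.swap i j) x = x ∘ Equiv.swap i j :=
    funext fun k ↦ by
      obtain ⟨l, rfl⟩ := (Equiv.swap i j).surjective k
      rw [MeasurableEquiv.piCongrLeft_apply_apply]
      simp
  rw [hx, gram_inv_comp_equiv_apply, Equiv.swap_apply_left]

variable [BorelSpace E] [SecondCountableTopology E]

lemma integral_gram_inv_apply_eq_zero {γ : ι → Measure E} [∀ i, SigmaFinite (γ i)] {i j : ι}
    [(γ i).IsNegInvariant] (hij : i ≠ j) : ∫ x, (gram ℝ x)⁻¹ i j ∂Measure.pi γ = 0 := by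
  have hcoord (k : ι) :
      MeasurePreserving (Function.update (fun _ ↦ id) i Neg.neg k : E → E) (γ k) (γ k) := by
    obtain rfl | hk := eq_or_ne k i
    · simpa using Measure.measurePreserving_neg (γ k)
    · simpa [hk] using MeasurePreserving.id (γ k)
  have hflip : MeasurePreserving (fun x : ι → E ↦ Function.update x i (-x i))
      (Measure.pi γ) (Measure.pi γ) := by
    convert measurePreserving_pi γ γ hcoord using 1
    ext x k
    by_cases hk : k = i <;> simp [hk]
  have hneg : ∫ x, (gram ℝ x)⁻¹ i j ∂Measure.pi γ = -∫ x, (gram ℝ x)⁻¹ i j ∂Measure.pi γ := by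
    conv_lhs => rw [← hflip.map_eq]
    rw [integral_map hflip.measurable.aemeasurable
      (measurable_gram_inv_apply i j).aestronglyMeasurable]
    simp_rw [gram_inv_update_neg_apply _ hij, integral_neg]
  linarith

lemma of_integral_gram_inv_eq_smul_one (γ : Measure E) [SigmaFinite γ] [γ.IsNegInvariant] :
    (of fun i j : ι ↦ ∫ x, (gram ℝ x)⁻¹ i j ∂Measure.pi (fun _ : ι ↦ γ)) =
      ((∑ i, ∫ x, (gram ℝ x)⁻¹ i i ∂Measure.pi (fun _ : ι ↦ γ)) / Fintype.card ι) •
        (1 : Matrix ι ι ℝ) := by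
  ext i j
  obtain rfl | hij := eq_or_ne i j
  · have hcard : (Fintype.card ι : ℝ) ≠ 0 := Nat.cast_ne_zero.2 (Fintype.card_pos_iff.2 ⟨i⟩).ne'
    rw [of_apply, Finset.sum_congr rfl fun k _ ↦ integral_gram_inv_apply_self_eq γ k i]
    simp [hcard]
  · simp [integral_gram_inv_apply_eq_zero hij, hij]

end GramInverseSymmetry

section GaussianLaw

open WithLp
open scoped RealInnerProductSpace

lemma isNegInvariant_of_integral_eq_zero {E : Type*} [NormedAddCommGroup E] [NormedSpace ℝ E]
    [CompleteSpace E] [SecondCountableTopology E] [MeasurableSpace E] [BorelSpace E]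
    {γ : Measure E} [IsGaussian γ] (hγ : ∫ x, x ∂γ = 0) : γ.IsNegInvariant where
  neg_eq_self := by
    have := Measure.isProbabilityMeasure_map (μ := γ) measurable_neg.aemeasurable
    refine Measure.ext_of_charFunDual (μ := γ.map Neg.neg) (funext fun L ↦ ?_)
    have hmean (L : StrongDual ℝ E) : ∫ x, L x ∂γ = 0 := by
      rw [L.integral_comp_comm IsGaussian.integrable_fun_id, hγ, map_zero]
    have hL : charFunDual (γ.map Neg.neg) L = charFunDual γ (-L) := by
      rw [charFunDual_apply, charFunDual_apply, integral_map (by fun_prop) (by fun_prop)]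
      simp
    have hvar : Var[⇑(-L); γ] = Var[L; γ] := variance_neg
    rw [hL, IsGaussian.charFunDual_eq, IsGaussian.charFunDual_eq, hvar]
    simp only [integral_complex_ofReal, hmean]

instance isNegInvariant_multivariateGaussian_zero {κ : Type*} [Fintype κ] [DecidableEq κ]
    (S : Matrix κ κ ℝ) : (multivariateGaussian 0 S).IsNegInvariant :=
  isNegInvariant_of_integral_eq_zero integral_id_multivariateGaussian

lemma map_eq_pi_multivariateGaussian {ι κ Ω : Type*} [Fintype ι] [Fintype κ] [DecidableEq κ]
    [MeasurableSpace Ω] {μ : Measure Ω} [IsProbabilityMeasure μ]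
    {X : Ω → ι → EuclideanSpace ℝ κ} (hX : Measurable X)
    {m : ι → EuclideanSpace ℝ κ} {S : ι → Matrix κ κ ℝ} (hS : ∀ i, (S i).PosSemidef)
    (hlaw : ∀ v : ι → EuclideanSpace ℝ κ, μ.map (fun ω ↦ ∑ i, ⟪X ω i, v i⟫) =
      gaussianReal (∑ i, ⟪v i, m i⟫) (∑ i, v i ⬝ᵥ S i *ᵥ v i).toNNReal) :
    μ.map X = Measure.pi fun i ↦ multivariateGaussian (m i) (S i) := by
  have := Measure.isProbabilityMeasure_map (μ := μ) hX.aemeasurable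
  refine charFun_eq_pi_iff.1 fun t ↦ ?_
  have hvar : 0 ≤ ∑ i, t i ⬝ᵥ S i *ᵥ t i :=
    Finset.sum_nonneg fun i _ ↦ (hS i).dotProduct_mulVec_nonneg (t i)
  calc charFun ((μ.map X).map (toLp 2)) t
      = charFun (μ.map fun ω ↦ ∑ i, ⟪X ω i, t i⟫) 1 := by
        rw [Measure.map_map (by fun_prop) hX, charFun_apply, charFun_apply,
          integral_map (by fun_prop) (by fun_prop), integral_map (by fun_prop) (by fun_prop)]
        simp [PiLp.inner_apply]
    _ = ∏ i, charFun (multivariateGaussian (m i) (S i)) (t i) := by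
        rw [hlaw, charFun_gaussianReal, Real.coe_toNNReal _ hvar]
        simp_rw [charFun_multivariateGaussian (hS _), ← Complex.exp_sum, Finset.sum_sub_distrib,
          ← Finset.sum_mul, ← Finset.sum_div]
        simp

end GaussianLaw

/-- **Inverse of a Gaussian Gram matrix.** Let `X₁,…,Xₙ` be i.i.d. `N(0,Σ)` in `ℝᵈ`
(characterized by joint linear marginals) with `Σ ≻ 0` and `n < d - 1`, and let
`G ∈ ℝ^{n×n}` be the Gram matrix `G_{ij} = XᵢᵀXⱼ`. Then `G` is almost surely invertible,
`E[G⁻¹] = (E[Tr(G⁻¹)]/n) · Iₙ`, and `E[Tr(G⁻¹)] ≤ (n/(d(d-n-1))) Tr(Σ⁻¹)`. -/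
theorem gaussian_gram_inverse (n d : ℕ) (hn : 0 < n) (hd : n + 1 < d)
    {Ω : Type*} [MeasurableSpace Ω] (μ : Measure Ω) [IsProbabilityMeasure μ]
    (Sig : Matrix (Fin d) (Fin d) ℝ) (hSig : Sig.PosDef)
    (Xi : Fin n → Ω → (Fin d → ℝ)) (hXmeas : ∀ i, Measurable (Xi i))
    (hgauss : ∀ v : Fin n → (Fin d → ℝ),
      μ.map (fun ω => ∑ i, v i ⬝ᵥ Xi i ω) =
        gaussianReal 0 (Real.toNNReal (∑ i, v i ⬝ᵥ Sig.mulVec (v i))))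
    (G : Ω → Matrix (Fin n) (Fin n) ℝ)
    (hG : ∀ ω, G ω = Matrix.of fun i j => Xi i ω ⬝ᵥ Xi j ω)
    (hGinvInt : ∀ i j, Integrable (fun ω => (G ω)⁻¹ i j) μ)
    (hTrInt : Integrable (fun ω => ((G ω)⁻¹).trace) μ) :
    (∀ᵐ ω ∂μ, IsUnit (G ω).det) ∧
      (Matrix.of fun i j => ∫ ω, (G ω)⁻¹ i j ∂μ) =
        ((∫ ω, ((G ω)⁻¹).trace ∂μ) / n) • (1 : Matrix (Fin n) (Fin n) ℝ) ∧
      (∫ ω, ((G ω)⁻¹).trace ∂μ) ≤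
        (n : ℝ) / ((d : ℝ) * ((d : ℝ) - (n : ℝ) - 1)) * (Sig⁻¹).trace := by
  set X : Ω → Fin n → EuclideanSpace ℝ (Fin d) := fun ω i ↦ WithLp.toLp 2 (Xi i ω)
  obtain rfl : G = fun ω ↦ gram ℝ (X ω) := funext fun ω ↦ by
    ext i j
    simp [hG, X, EuclideanSpace.inner_eq_star_dotProduct, dotProduct_comm]
  have hX : Measurable X := by fun_prop
  have hlaw : μ.map X = Measure.pi fun _ ↦ multivariateGaussian 0 Sig :=
    map_eq_pi_multivariateGaussian hX (fun _ ↦ hSig.posSemidef) fun v ↦ by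
      simpa [X, EuclideanSpace.inner_eq_star_dotProduct] using hgauss fun i ↦ (v i).ofLp
  have hmean (i j : Fin n) : ∫ ω, (gram ℝ (X ω))⁻¹ i j ∂μ =
      ∫ x, (gram ℝ x)⁻¹ i j ∂Measure.pi fun _ ↦ multivariateGaussian 0 Sig := by
    rw [← hlaw, integral_map hX.aemeasurable (measurable_gram_inv_apply i j).aestronglyMeasurable]
  have htrace : ∫ ω, ((gram ℝ (X ω))⁻¹).trace ∂μ = ∑ i, ∫ ω, (gram ℝ (X ω))⁻¹ i i ∂μ :=
    integral_finsetSum _ fun i _ ↦ hGinvInt i i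
  simp_rw [htrace, hmean]
  refine ⟨?_, by
    simpa using of_integral_gram_inv_eq_smul_one (ι := Fin n) (multivariateGaussian 0 Sig), ?_⟩
  · have hind := ae_linearIndependent_pi_multivariateGaussian (ι := Fin n) hSig
      (by simpa using (by omega : n ≤ d))
    filter_upwards [ae_of_ae_map hX.aemeasurable (hlaw ▸ hind)] with ω hω
    exact isUnit_det_gram_iff_linearIndependent.2 hω
  · refine (Finset.sum_le_sum fun i _ ↦
      integral_gram_inv_apply_self_le hSig (by simpa) i).trans_eq ?_
    simp [field]
end
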